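/- arXiv:math/0408008 — 7 statements merged into one kernel-verified Lean document; each statement's English description precedes it below -/
import Mathlib

section
/- Let 𝕂 be a nontrivially normed field and A a unital associative normed 𝕂-algebra (completeness of A is not assumed). Assume that the set of invertible elements {a : A | IsUnit a} is open in A and that the inversion map a ↦ a⁻¹ is continuous on this set. Then inversion is infinitely differentiable on the units: the map Ring.inverse : A → A is C^∞ (ContDiffOn 𝕂 ⊤) on the open set {a : A | IsUnit a}. -/
/-!
An isometric embedding reflects continuity, and inversion is continuous on the units of the
completion of a normed ring, so it is continuous on the units of the ring itself. The identity
`y⁻¹ - x⁻¹ + x⁻¹ (y - x) x⁻¹ = (x⁻¹ - y⁻¹) (y - x) x⁻¹` then shows that inversion has derivative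
`h ↦ -x⁻¹ h x⁻¹` at `x`. This is a smooth function of `x⁻¹`, so inversion solves a differential
equation `f' = Φ ∘ f` with `Φ` smooth, and each order of differentiability of `f` yields the next.
-/

open Asymptotics ContinuousLinearMap Set Topology UniformSpace
open scoped ContDiff Ring

section Bootstrap

variable {𝕜 E F : Type*} [NontriviallyNormedField 𝕜]
  [NormedAddCommGroup E] [NormedSpace 𝕜 E] [NormedAddCommGroup F] [NormedSpace 𝕜 F]
  {s : Set E} {f : E → F}

theorem contDiffOn_succ_of_hasFDerivWithinAt {n : ℕ} {f' : E → E →L[𝕜] F}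
    (hf : ∀ x ∈ s, HasFDerivWithinAt f (f' x) s x) (hf' : ContDiffOn 𝕜 n f' s) :
    ContDiffOn 𝕜 (n + 1) f s :=
  (contDiffOn_succ_iff_hasFDerivWithinAt (by simp)).2 fun x hx ↦
    ⟨s, by simpa only [insert_eq_of_mem hx] using self_mem_nhdsWithin, by simp, f', hf, hf'⟩

theorem contDiffOn_succ_of_hasFDerivWithinAt_comp {n : ℕ} {Φ : F → E →L[𝕜] F} {t : Set F}
    (hΦ : ContDiffOn 𝕜 n Φ t) (hst : MapsTo f s t)
    (hf : ∀ x ∈ s, HasFDerivWithinAt f (Φ (f x)) s x) :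
    ContDiffOn 𝕜 (n + 1) f s := by
  refine contDiffOn_succ_of_hasFDerivWithinAt hf (hΦ.comp ?_ hst)
  induction n with
  | zero => exact contDiffOn_zero.2 fun x hx ↦ (hf x hx).continuousWithinAt
  | succ n ih =>
    have hΦ' : ContDiffOn 𝕜 n Φ t := hΦ.of_le (mod_cast n.le_succ)
    exact_mod_cast contDiffOn_succ_of_hasFDerivWithinAt hf (hΦ'.comp (ih hΦ') hst)

end Bootstrap

theorem ringInverse_sub_ringInverse_add_mul_sub_mul {R : Type*} [Ring R] {a b : R}
    (h : IsUnit a ↔ IsUnit b) :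
    b⁻¹ʳ - a⁻¹ʳ + a⁻¹ʳ * (b - a) * a⁻¹ʳ = (a⁻¹ʳ - b⁻¹ʳ) * (b - a) * a⁻¹ʳ := by
  rw [Ring.inverse_sub_inverse h.symm]
  noncomm_ring

theorem map_ringInverse_of_isUnit {M N F : Type*} [MonoidWithZero M] [MonoidWithZero N]
    [FunLike F M N] [MonoidHomClass F M N] (f : F) {a : M} (ha : IsUnit a) :
    f a⁻¹ʳ = (f a)⁻¹ʳ := by
  obtain ⟨u, rfl⟩ := ha
  rw [Ring.inverse_unit]
  exact (Ring.inverse_unit (Units.map (f : M →* N) u)).symm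

theorem continuousOn_ringInverse {R : Type*} [SeminormedRing R] :
    ContinuousOn (Ring.inverse : R → R) {x | IsUnit x} := by
  let ι : R →+* Completion R := Completion.coeRingHom
  have hι : IsInducing ι := (Completion.isUniformInducing_coe R).isInducing
  rw [hι.continuousOn_iff]
  rintro _ ⟨u, rfl⟩
  have hcompletion : ContinuousWithinAt (fun x ↦ (ι x)⁻¹ʳ) {x | IsUnit x} (u : R) :=
    (NormedRing.inverse_continuousAt (Units.map (ι : R →* Completion R) u)).comp_continuousWithinAt
      (f := ι) hι.continuous.continuousWithinAt
  exact hcompletion.congr_of_mem (fun _ ↦ map_ringInverse_of_isUnit ι) u.isUnit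

theorem hasFDerivWithinAt_ringInverse (𝕜 : Type*) {R : Type*} [NontriviallyNormedField 𝕜]
    [SeminormedRing R] [NormedAlgebra 𝕜 R] {x : R} (hx : IsUnit x) :
    HasFDerivWithinAt (Ring.inverse : R → R) (-mulLeftRight 𝕜 R x⁻¹ʳ x⁻¹ʳ) {y | IsUnit y} x := by
  have hdiff : (fun y ↦ x⁻¹ʳ - y⁻¹ʳ) =o[𝓝[{y | IsUnit y}] x] fun _ ↦ (1 : ℝ) := by
    rw [isLittleO_one_iff]
    simpa only [sub_self] using (continuousOn_ringInverse x hx).tendsto.const_sub x⁻¹ʳ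
  have hremainder : (fun y ↦ (x⁻¹ʳ - y⁻¹ʳ) * (y - x) * x⁻¹ʳ)
      =o[𝓝[{y | IsUnit y}] x] fun y ↦ y - x := by
    simpa using ((hdiff.mul_isBigO (isBigO_refl (fun y ↦ y - x) _).norm_right).mul_isBigO
      (isBigO_const_const x⁻¹ʳ (one_ne_zero (α := ℝ)) _))
  refine .of_isLittleO (hremainder.congr' ?_ .rfl)
  filter_upwards [self_mem_nhdsWithin] with y hy
  simpa using (ringInverse_sub_ringInverse_add_mul_sub_mul (iff_of_true hx hy)).symm

theorem stmt0_general {𝕂 : Type*} [NontriviallyNormedField 𝕂]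
    {A : Type*} [NormedRing A] [NormedAlgebra 𝕂 A] :
    ContDiffOn 𝕂 (⊤ : ℕ∞) (Ring.inverse : A → A) {a : A | IsUnit a} := by
  have hΦ : ContDiff 𝕂 ∞ fun b : A ↦ -mulLeftRight 𝕂 A b b := by fun_prop
  refine contDiffOn_infty.2 fun n ↦ ContDiffOn.of_le (n := n + 1) ?_ (mod_cast n.le_succ)
  exact contDiffOn_succ_of_hasFDerivWithinAt_comp (contDiff_infty.1 hΦ n).contDiffOn
    (mapsTo_univ _ _) fun _ ↦ hasFDerivWithinAt_ringInverse 𝕂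

theorem stmt0 {𝕂 : Type*} [NontriviallyNormedField 𝕂]
    {A : Type*} [NormedRing A] [NormedAlgebra 𝕂 A]
    (h_open : IsOpen {a : A | IsUnit a})
    (h_cont : ContinuousOn (Ring.inverse : A → A) {a : A | IsUnit a}) :
    ContDiffOn 𝕂 (⊤ : ℕ∞) (Ring.inverse : A → A) {a : A | IsUnit a} :=
  stmt0_general
end

section
/- Let K be a local field, i.e. a non-discrete, nontrivially normed field whose norm is nonarchimedean (‖x + y‖ ≤ max(‖x‖, ‖y‖)) and which is locally compact. Let d ≥ 1 and let M be a σ-compact Hausdorff topological space such that every point of M has an open neighbourhood homeomorphic to an open subset of K^d (K^d = Fin d → K with the supremum norm). Then M is homeomorphic to an open subset of K^d. -/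
/-!
A noncompact, locally compact, totally disconnected group `E`, such as `K^d`, has a basis of compact
open sets, so a σ-compact Hausdorff space `M` modelled on `E` is covered by countably many charts
with compact open domains. These domains are clopen, so they can be made disjoint without leaving
the class of compact open sets. No finite union of compact sets exhausts `E`, so the images of the
charts can be translated one after the other away from all the previous ones. The translated charts
then glue to an injective local homeomorphism, that is, to an open embedding of `M` into `E`.
-/

open Function Set Topology TopologicalSpace
open scoped Pointwise

section Charts

variable {X Y : Type*} [TopologicalSpace X] [TopologicalSpace Y]

theorem prespectralSpace_of_totallyDisconnectedSpace [T2Space X] [LocallyCompactSpace X]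
    [TotallyDisconnectedSpace X] : PrespectralSpace X := by
  refine ⟨isTopologicalBasis_of_isOpen_of_nhds (fun _ hB ↦ hB.1) fun x U hxU hU ↦ ?_⟩
  obtain ⟨L, hL, hxL, hLU⟩ := exists_compact_subset hU hxU
  obtain ⟨B, hB, hxB, hBL⟩ :=
    loc_compact_Haus_tot_disc_of_zero_dim.exists_subset_of_mem_open hxL isOpen_interior
  have hBL : B ⊆ L := hBL.trans interior_subset
  exact ⟨B, ⟨hB.isOpen, hL.of_isClosed_subset hB.isClosed hBL⟩, hxB, hBL.trans hLU⟩

theorem isCompact_target_of_isCompact_source {e : OpenPartialHomeomorph X Y}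
    (he : IsCompact e.source) : IsCompact e.target :=
  e.image_source_eq_target ▸ he.image_of_continuousOn e.continuousOn

theorem exists_chart_of_homeomorph {V : Set X} {W : Set Y} (hV : IsOpen V) (hW : IsOpen W)
    (h : V ≃ₜ W) {x : X} (hx : x ∈ V) :
    ∃ e : OpenPartialHomeomorph X Y, x ∈ e.source := by
  have : Nonempty V := ⟨⟨x, hx⟩⟩
  have hVY : IsOpenEmbedding fun v ↦ (h v : Y) :=
    hW.isOpenEmbedding_subtypeVal.comp h.isOpenEmbedding
  exact ⟨(hV.isOpenEmbedding_subtypeVal.toOpenPartialHomeomorph Subtype.val).symm.trans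
    (hVY.toOpenPartialHomeomorph _), by simpa using hx⟩

theorem exists_chart_isCompact_source [PrespectralSpace Y] (e : OpenPartialHomeomorph X Y) {x : X}
    (hx : x ∈ e.source) :
    ∃ e' : OpenPartialHomeomorph X Y, x ∈ e'.source ∧ IsCompact e'.source := by
  obtain ⟨B, ⟨hBo, hBc⟩, hxB, hB⟩ := PrespectralSpace.isTopologicalBasis.exists_subset_of_mem_open
    (e.map_source hx) e.open_target
  refine ⟨(e.symm.restrOpen B hBo).symm, ?_, isCompact_target_of_isCompact_source ?_⟩
  · simpa [hx] using hxB
  · simpa [inter_eq_self_of_subset_right hB] using hBc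

theorem exists_seq_chart_isCompact_source_pairwise_disjoint [T2Space X] [SigmaCompactSpace X]
    [Nonempty X]
    (h : ∀ x : X, ∃ e : OpenPartialHomeomorph X Y, x ∈ e.source ∧ IsCompact e.source) :
    ∃ e : ℕ → OpenPartialHomeomorph X Y, (∀ n, IsCompact (e n).source) ∧
      Pairwise (Disjoint on fun n ↦ (e n).source) ∧ ⋃ n, (e n).source = univ := by
  choose c hmem hcompact using h
  obtain ⟨s, hs, hcover⟩ :=
    countable_cover_nhds_of_sigmaCompact fun x ↦ (c x).open_source.mem_nhds (hmem x)
  have hsne : s.Nonempty := nonempty_biUnion.1 (hcover ▸ univ_nonempty) |>.imp fun _ hx ↦ hx.1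
  obtain ⟨u, rfl⟩ := hs.exists_eq_range hsne
  let C : ℕ → Set X := fun n ↦ (c (u n)).source
  have hC : ⋃ n, C n = univ := by rwa [biUnion_range] at hcover
  have hCclopen (n : ℕ) : IsClopen (C n) := ⟨(hcompact _).isClosed, (c (u n)).open_source⟩
  have hDclopen (n : ℕ) : IsClopen (disjointed C n) :=
    disjointedRec (fun _ i ht ↦ ht.diff (hCclopen i)) (hCclopen n)
  let e (n : ℕ) := (c (u n)).restrOpen (disjointed C n) (hDclopen n).isOpen
  have hsource (n : ℕ) : (e n).source = disjointed C n :=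
    inter_eq_self_of_subset_right (disjointed_le C n)
  refine ⟨e, ?_, ?_, ?_⟩ <;> simp only [hsource]
  · exact fun n ↦ (hcompact _).of_isClosed_subset (hDclopen n).isClosed (disjointed_le C n)
  · exact disjoint_disjointed C
  · rw [iUnion_disjointed, hC]

theorem exists_isOpenEmbedding_of_pairwise_disjoint_charts {ι : Type*}
    (e : ι → OpenPartialHomeomorph X Y) (hcover : ⋃ i, (e i).source = univ)
    (hsource : Pairwise (Disjoint on fun i ↦ (e i).source))
    (htarget : Pairwise (Disjoint on fun i ↦ (e i).target)) :
    ∃ f : X → Y, IsOpenEmbedding f := by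
  choose i hi using iUnion_eq_univ_iff.1 hcover
  have hindex {x : X} {j : ι} (hx : x ∈ (e j).source) : i x = j :=
    hsource.eq (not_disjoint_iff.2 ⟨x, hi x, hx⟩)
  let f : X → Y := fun x ↦ e (i x) x
  have hf : IsLocalHomeomorph f := .mk f fun x ↦
    ⟨e (i x), hi x, fun y hy ↦ by simp only [f, hindex hy]⟩
  refine ⟨f, hf.isOpenEmbedding_of_injective fun x y (hxy : e (i x) x = e (i y) y) ↦ ?_⟩
  have hij : i x = i y := htarget.eq <|
    not_disjoint_iff.2 ⟨e (i y) y, hxy ▸ (e _).map_source (hi x), (e _).map_source (hi y)⟩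
  exact (e (i x)).injOn (hi x) (hij ▸ hi y) (hxy.trans (by rw [hij]))

end Charts

section Translates

variable {G : Type*} [TopologicalSpace G] [AddGroup G] [IsTopologicalAddGroup G]
  [NoncompactSpace G]

theorem exists_pairwise_disjoint_vadd_of_isCompact {B : ℕ → Set G} (hB : ∀ n, IsCompact (B n)) :
    ∃ a : ℕ → G, Pairwise (Disjoint on fun n ↦ a n +ᵥ B n) := by
  choose t ht using fun (L : Compacts G) n ↦ exists_disjoint_vadd_of_isCompact L.isCompact (hB n)
  -- `L n` is the union of the translates chosen before step `n`.
  let L : ℕ → Compacts G := fun n ↦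
    n.rec ⊥ fun n L ↦ L ⊔ ⟨t L n +ᵥ B n, (hB n).vadd (t L n)⟩
  have hL : Monotone L := monotone_nat_of_le_succ fun _ ↦ le_sup_left
  have hsub (n : ℕ) : t (L n) n +ᵥ B n ⊆ L (n + 1) := subset_union_right
  refine ⟨fun n ↦ t (L n) n, (pairwise_disjoint_on _).2 fun m n hmn ↦ ?_⟩
  exact (ht (L n) n).mono_left ((hsub m).trans (hL (Nat.succ_le_of_lt hmn)))

theorem exists_isOpenEmbedding_of_isCompact_source {X : Type*} [TopologicalSpace X]
    (e : ℕ → OpenPartialHomeomorph X G) (hcompact : ∀ n, IsCompact (e n).source)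
    (hsource : Pairwise (Disjoint on fun n ↦ (e n).source)) (hcover : ⋃ n, (e n).source = univ) :
    ∃ f : X → G, IsOpenEmbedding f := by
  obtain ⟨a, ha⟩ := exists_pairwise_disjoint_vadd_of_isCompact
    fun n ↦ isCompact_target_of_isCompact_source (hcompact n)
  refine exists_isOpenEmbedding_of_pairwise_disjoint_charts
    (fun n ↦ (e n).transHomeomorph (Homeomorph.addLeft (a n))) hcover hsource ?_
  have htarget (n : ℕ) :
      ((e n).transHomeomorph (Homeomorph.addLeft (a n))).target = a n +ᵥ (e n).target :=
    (Homeomorph.addLeft (a n)).image_eq_preimage_symm _ |>.symm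
  simpa only [htarget] using ha

end Translates

theorem stmt7_general {E : Type*} [TopologicalSpace E] [AddGroup E] [IsTopologicalAddGroup E]
    [LocallyCompactSpace E] [TotallyDisconnectedSpace E] [NoncompactSpace E]
    {M : Type*} [TopologicalSpace M] [T2Space M] [SigmaCompactSpace M]
    (hloc : ∀ x : M, ∃ (V : Set M) (W : Set E),
      x ∈ V ∧ IsOpen V ∧ IsOpen W ∧ Nonempty (V ≃ₜ W)) :
    ∃ U : Set E, IsOpen U ∧ Nonempty (M ≃ₜ U) := by
  have : PrespectralSpace E := prespectralSpace_of_totallyDisconnectedSpace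
  rcases isEmpty_or_nonempty M with _ | _
  · exact ⟨∅, isOpen_empty, ⟨.empty⟩⟩
  have hchart (x : M) : ∃ e : OpenPartialHomeomorph M E, x ∈ e.source ∧ IsCompact e.source := by
    obtain ⟨V, W, hx, hV, hW, ⟨h⟩⟩ := hloc x
    obtain ⟨e, he⟩ := exists_chart_of_homeomorph hV hW h hx
    exact exists_chart_isCompact_source e he
  obtain ⟨e, hcompact, hsource, hcover⟩ :=
    exists_seq_chart_isCompact_source_pairwise_disjoint hchart
  obtain ⟨f, hf⟩ := exists_isOpenEmbedding_of_isCompact_source e hcompact hsource hcover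
  exact ⟨range f, hf.isOpen_range, ⟨hf.isEmbedding.toHomeomorph⟩⟩

theorem stmt7 {K : Type*} [NontriviallyNormedField K] [IsUltrametricDist K]
    [LocallyCompactSpace K] {d : ℕ} (hd : 1 ≤ d)
    {M : Type*} [TopologicalSpace M] [T2Space M] [SigmaCompactSpace M]
    (hloc : ∀ x : M, ∃ (V : Set M) (W : Set (Fin d → K)),
      x ∈ V ∧ IsOpen V ∧ IsOpen W ∧ Nonempty (V ≃ₜ W)) :
    ∃ U : Set (Fin d → K), IsOpen U ∧ Nonempty (M ≃ₜ U) := by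
  have : Nonempty (Fin d) := ⟨⟨0, hd⟩⟩
  have : NoncompactSpace (Fin d → K) := NormedSpace.noncompactSpace K _
  exact stmt7_general hloc
end

section
/- Let K be a local field, i.e. a non-discrete, nontrivially normed field whose norm is nonarchimedean and which is locally compact, let d ∈ ℕ, and let R ⊆ K^d (with the supremum norm) be a compact open subset. Then there exist ε > 0 with R + B(0, ε) ⊆ R, a natural number m, and points a_1, …, a_m ∈ R such that the open balls B(a_1, ε), …, B(a_m, ε) are pairwise disjoint and R = B(a_1, ε) ∪ … ∪ B(a_m, ε). (If R = ∅, take m = 0.) -/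
/-!
By compactness, some `ε`-thickening of `R` stays inside `R`. Ultrametric balls of a common radius
are equal or disjoint, so keeping one centre for each distinct ball of a finite cover by
`ε`-balls turns the cover into a partition.
-/

section UltrametricSpace

open Metric

variable {X : Type*} [PseudoMetricSpace X] [IsUltrametricDist X]

theorem pairwiseDisjoint_ball_of_injOn {s : Set X} {r : ℝ} (hs : s.InjOn fun x => ball x r) :
    s.PairwiseDisjoint fun x => ball x r := fun x hx y hy hxy =>
  (IsUltrametricDist.ball_eq_or_disjoint x y r).resolve_left fun h => hxy (hs hx hy h)

theorem exists_subset_pairwiseDisjoint_biUnion_ball_eq_thickening (s : Set X) (r : ℝ) :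
    ∃ t ⊆ s, (t.PairwiseDisjoint fun x => ball x r) ∧ ⋃ x ∈ t, ball x r = thickening r s := by
  obtain ⟨t, hts, ht⟩ := Set.exists_subset_bijOn s fun x => ball x r
  refine ⟨t, hts, pairwiseDisjoint_ball_of_injOn ht.injOn, ?_⟩
  rw [thickening_eq_biUnion_ball, ← Set.sUnion_image, ht.image_eq, Set.sUnion_image]

theorem exists_finite_pairwiseDisjoint_ball_cover {s : Set X} (hs : TotallyBounded s) {r : ℝ}
    (hr : 0 < r) :
    ∃ t ⊆ s, t.Finite ∧ (t.PairwiseDisjoint fun x => ball x r) ∧ s ⊆ ⋃ x ∈ t, ball x r := by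
  obtain ⟨u, hus, hu, hsu⟩ := finite_approx_of_totallyBounded hs r hr
  obtain ⟨t, htu, hdisj, ht⟩ := exists_subset_pairwiseDisjoint_biUnion_ball_eq_thickening u r
  refine ⟨t, htu.trans hus, hu.subset htu, hdisj, ?_⟩
  rwa [ht, thickening_eq_biUnion_ball]

theorem exists_finite_partition_ball_of_thickening_subset {s : Set X} (hs : TotallyBounded s)
    {r : ℝ} (hr : 0 < r) (hrs : thickening r s ⊆ s) :
    ∃ t ⊆ s, t.Finite ∧ (t.PairwiseDisjoint fun x => ball x r) ∧ s = ⋃ x ∈ t, ball x r := by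
  obtain ⟨t, hts, hfin, hdisj, hcover⟩ := exists_finite_pairwiseDisjoint_ball_cover hs hr
  have hballs : ⋃ x ∈ t, ball x r ⊆ s :=
    thickening_eq_biUnion_ball.symm.trans_subset ((thickening_subset_of_subset r hts).trans hrs)
  exact ⟨t, hts, hfin, hdisj, hcover.antisymm hballs⟩

end UltrametricSpace

open Pointwise in
theorem stmt9_general {E : Type*} [SeminormedAddCommGroup E] [IsUltrametricDist E] {R : Set E}
    (hRc : IsCompact R) (hRo : IsOpen R) :
    ∃ ε > (0 : ℝ), R + Metric.ball (0 : E) ε ⊆ R ∧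
      ∃ (m : ℕ) (a : Fin m → E),
        (∀ i, a i ∈ R) ∧
        Pairwise (Function.onFun Disjoint (fun i => Metric.ball (a i) ε)) ∧
        R = ⋃ i, Metric.ball (a i) ε := by
  obtain ⟨ε, hε, hεR⟩ := hRc.exists_thickening_subset_open hRo subset_rfl
  obtain ⟨t, htR, hfin, hdisj, hR⟩ :=
    exists_finite_partition_ball_of_thickening_subset hRc.totallyBounded hε hεR
  obtain ⟨m, a, ha, rfl⟩ := hfin.fin_param
  refine ⟨ε, hε, (add_ball_zero ε R).trans_subset hεR, m, a, Set.range_subset_iff.1 htR, ?_, ?_⟩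
  · exact fun i j hij => hdisj ⟨i, rfl⟩ ⟨j, rfl⟩ (ha.ne hij)
  · rwa [Set.biUnion_range] at hR

open Pointwise in
theorem stmt9 {K : Type*} [NontriviallyNormedField K] [IsUltrametricDist K]
    [LocallyCompactSpace K] {d : ℕ} {R : Set (Fin d → K)}
    (hRc : IsCompact R) (hRo : IsOpen R) :
    ∃ ε > (0 : ℝ), R + Metric.ball (0 : Fin d → K) ε ⊆ R ∧
      ∃ (m : ℕ) (a : Fin m → (Fin d → K)),
        (∀ i, a i ∈ R) ∧
        Pairwise (Function.onFun Disjoint (fun i => Metric.ball (a i) ε)) ∧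
        R = ⋃ i, Metric.ball (a i) ε :=
  stmt9_general hRc hRo
end

section
/- Let K be a local field, i.e. a non-discrete, nontrivially normed field whose norm is nonarchimedean and which is locally compact, let d ≥ 1, let U ⊆ K^d (supremum norm) be a non-empty open subset, and let (U_i)_{i∈ι} be a family of open sets covering U. Then there exist a countable index set J, points a_j ∈ U and radii r_j > 0 for j ∈ J, such that: (i) the open balls B(a_j, r_j), j ∈ J, are pairwise disjoint; (ii) their union equals U; and (iii) the cover is subordinate to (U_i): for every j ∈ J there exists i(j) ∈ ι with B(a_j, r_j) ⊆ U_{i(j)}. -/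
/-!
Two balls of an ultrametric space are nested or disjoint, so the maximal members of any family of
balls are pairwise disjoint. Consider the balls which lie in some `V i` and whose radius belongs to
a fixed sequence decreasing to `0`. They cover `⋃ i, V i`. A ball containing a given one is
determined by its radius, and it equals the given one unless its radius is larger; so only finitely
many balls of the family contain a given one, each lies in a maximal one, and the maximal ones
partition `⋃ i, V i`. In a separable space there are countably many of them.
-/

open Set Filter Topology Metric

section Maximal

variable {α : Type*}

theorem pairwiseDisjoint_setOf_maximal [PartialOrder α] [OrderBot α] {F : Set α}
    (hF : ∀ s ∈ F, ∀ t ∈ F, s ≤ t ∨ t ≤ s ∨ Disjoint s t) :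
    {s | Maximal (· ∈ F) s}.PairwiseDisjoint id := by
  intro s hs t ht hne
  rcases hF s hs.prop t ht.prop with hst | hts | hdisj
  · exact absurd (hs.eq_of_le ht.prop hst) hne
  · exact absurd (ht.eq_of_le hs.prop hts).symm hne
  · exact hdisj

theorem exists_le_maximal_of_finite_inter_Ici [Preorder α] {F : Set α} {s : α} (hs : s ∈ F)
    (hfin : (F ∩ Ici s).Finite) : ∃ t, s ≤ t ∧ Maximal (· ∈ F) t := by
  obtain ⟨t, hst, ht⟩ := hfin.exists_le_maximal ⟨hs, self_mem_Ici⟩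
  exact ⟨t, hst, ht.prop.1, fun u hu htu ↦ ht.le_of_ge ⟨hu, hst.trans htu⟩ htu⟩

theorem sUnion_setOf_maximal {F : Set (Set α)}
    (hF : ∀ s ∈ F, ∃ t, s ⊆ t ∧ Maximal (· ∈ F) t) :
    ⋃₀ {s | Maximal (· ∈ F) s} = ⋃₀ F := by
  refine (sUnion_subset_sUnion fun s hs ↦ hs.prop).antisymm (sUnion_subset fun s hs ↦ ?_)
  obtain ⟨t, hst, ht⟩ := hF s hs
  exact hst.trans (subset_sUnion_of_mem ht)

end Maximal

section SubordinateBalls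

variable {X : Type*} [PseudoMetricSpace X] {ι : Sort*} {V : ι → Set X} {ρ : ℕ → ℝ}

/-- The open balls subordinate to the family `V`, i.e. contained in one of its members, with radius
a term of the sequence `ρ`. A ball is recorded as a set, so that its possibly many centres do not
count as different balls. -/
def subordinateBalls (ρ : ℕ → ℝ) (V : ι → Set X) : Set (Set X) :=
  {B | (∃ x n, B = ball x (ρ n)) ∧ ∃ i, B ⊆ V i}

theorem sUnion_subordinateBalls (hpos : ∀ n, 0 < ρ n) (hlim : Tendsto ρ atTop (𝓝 0))
    (hV : ∀ i, IsOpen (V i)) : ⋃₀ subordinateBalls ρ V = ⋃ i, V i := by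
  apply Subset.antisymm
  · rintro x ⟨B, ⟨-, i, hBi⟩, hxB⟩
    exact mem_iUnion_of_mem i (hBi hxB)
  · refine iUnion_subset fun i x hx ↦ ?_
    obtain ⟨ε, hε, hεV⟩ := isOpen_iff.1 (hV i) x hx
    obtain ⟨n, hn⟩ := (hlim.eventually_lt_const hε).exists
    exact ⟨ball x (ρ n), ⟨⟨x, n, rfl⟩, i, (ball_subset_ball hn.le).trans hεV⟩,
      mem_ball_self (hpos n)⟩

variable [IsUltrametricDist X]

theorem finite_subordinateBalls_inter_Ici (hpos : ∀ n, 0 < ρ n) (hanti : Antitone ρ) {B : Set X}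
    (hB : B ∈ subordinateBalls ρ V) : (subordinateBalls ρ V ∩ Ici B).Finite := by
  obtain ⟨⟨x, n, rfl⟩, -⟩ := hB
  refine ((finite_Iic n).image fun m ↦ ball x (ρ m)).subset ?_
  rintro _ ⟨⟨⟨y, m, rfl⟩, -⟩, hsub : ball x (ρ n) ⊆ ball y (ρ m)⟩
  have recenter : ball y (ρ m) = ball x (ρ m) :=
    IsUltrametricDist.ball_eq_of_mem (hsub (mem_ball_self (hpos n)))
  rw [recenter] at hsub ⊢
  rcases le_total m n with hmn | hnm
  · exact ⟨m, hmn, rfl⟩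
  · exact ⟨n, self_mem_Iic, hsub.antisymm (ball_subset_ball (hanti hnm))⟩

theorem exists_pairwiseDisjoint_balls_sUnion_eq_iUnion (hV : ∀ i, IsOpen (V i)) :
    ∃ F : Set (Set X), F.PairwiseDisjoint id ∧ ⋃₀ F = ⋃ i, V i ∧
      ∀ B ∈ F, (∃ x r, 0 < r ∧ B = ball x r) ∧ ∃ i, B ⊆ V i := by
  obtain ⟨ρ, hanti, hpos, hlim⟩ := exists_seq_strictAnti_tendsto (0 : ℝ)
  refine ⟨{B | Maximal (· ∈ subordinateBalls ρ V) B}, pairwiseDisjoint_setOf_maximal ?_, ?_, ?_⟩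
  · rintro _ ⟨⟨x, n, rfl⟩, -⟩ _ ⟨⟨y, m, rfl⟩, -⟩
    exact IsUltrametricDist.ball_subset_trichotomy x y (ρ n) (ρ m)
  · rw [← sUnion_subordinateBalls hpos hlim hV]
    exact sUnion_setOf_maximal fun B hB ↦ exists_le_maximal_of_finite_inter_Ici hB
      (finite_subordinateBalls_inter_Ici hpos hanti.antitone hB)
  · intro B hB
    obtain ⟨⟨x, n, hBx⟩, hBV⟩ := hB.prop
    exact ⟨⟨x, ρ n, hpos n, hBx⟩, hBV⟩

end SubordinateBalls

theorem stmt10_general {X : Type*} [PseudoMetricSpace X] [IsUltrametricDist X]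
    [TopologicalSpace.SeparableSpace X] {U : Set X} (hUo : IsOpen U)
    {ι : Type*} (V : ι → Set X) (hVo : ∀ i, IsOpen (V i)) (hcov : U ⊆ ⋃ i, V i) :
    ∃ (J : Type) (_ : Countable J) (a : J → X) (r : J → ℝ),
      (∀ j, 0 < r j) ∧ (∀ j, a j ∈ U) ∧
      Pairwise (Function.onFun Disjoint (fun j => ball (a j) (r j))) ∧
      (⋃ j, ball (a j) (r j)) = U ∧
      ∀ j, ∃ i, ball (a j) (r j) ⊆ V i := by
  obtain ⟨F, hdisj, hUnion, hF⟩ :=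
    exists_pairwiseDisjoint_balls_sUnion_eq_iUnion fun i ↦ hUo.inter (hVo i)
  rw [← inter_iUnion, inter_eq_left.2 hcov] at hUnion
  choose a r hr hball using fun B : F ↦ (hF B B.2).1
  have mem_self (B : F) : a B ∈ (B : Set X) := (hball B).symm ▸ mem_ball_self (hr B)
  have hpairwise : Pairwise (Function.onFun Disjoint ((↑) : F → Set X)) :=
    (pairwise_subtype_iff_pairwise_set _ _).2 hdisj
  have : Countable F := hpairwise.countable_of_isOpen_disjoint
    (fun B ↦ (hball B).symm ▸ isOpen_ball) fun B ↦ ⟨a B, mem_self B⟩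
  -- `F` lives in the universe of `X`; being countable, it has a copy in `Type`.
  let e : Shrink.{0} F ≃ F := (equivShrink.{0} F).symm
  refine ⟨Shrink.{0} F, e.injective.countable, a ∘ e, r ∘ e, fun j ↦ hr (e j),
    fun j ↦ hUnion ▸ ⟨e j, (e j).2, mem_self (e j)⟩, ?_, ?_, ?_⟩ <;>
    simp only [Function.comp_apply, ← hball]
  · exact hpairwise.comp_of_injective e.injective
  · rw [e.surjective.iUnion_comp fun B : F ↦ (B : Set X), ← sUnion_eq_iUnion, hUnion]
  · intro j
    obtain ⟨i, hi⟩ := (hF (e j) (e j).2).2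
    exact ⟨i, hi.trans inter_subset_right⟩

theorem stmt10 {K : Type*} [NontriviallyNormedField K] [IsUltrametricDist K]
    [LocallyCompactSpace K] {d : ℕ} (hd : 1 ≤ d)
    {U : Set (Fin d → K)} (hUo : IsOpen U) (hUne : U.Nonempty)
    {ι : Type*} (V : ι → Set (Fin d → K)) (hVo : ∀ i, IsOpen (V i))
    (hcov : U ⊆ ⋃ i, V i) :
    ∃ (J : Type) (_ : Countable J) (a : J → (Fin d → K)) (r : J → ℝ),
      (∀ j, 0 < r j) ∧ (∀ j, a j ∈ U) ∧
      Pairwise (Function.onFun Disjoint (fun j => Metric.ball (a j) (r j))) ∧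
      (⋃ j, Metric.ball (a j) (r j)) = U ∧
      ∀ j, ∃ i, Metric.ball (a j) (r j) ⊆ V i := by
  have : ProperSpace K := ProperSpace.of_locallyCompactSpace K
  exact stmt10_general hUo V hVo hcov
end

section
/- Let K be a local field, i.e. a non-discrete, nontrivially normed field whose norm is nonarchimedean and which is locally compact, let d ∈ ℕ, and let M be a σ-compact Hausdorff topological space such that every point of M has an open neighbourhood homeomorphic to an open subset of K^d. Let (U_i)_{i∈ι} be an open cover of M. Then there exists a family (V_i)_{i∈ι} of pairwise disjoint open-and-closed subsets of M with V_i ⊆ U_i for every i ∈ ι and ⋃_{i∈ι} V_i = M. Equivalently, the indicator functions h_i = 1_{V_i} : M → K form a partition of unity subordinate to (U_i) consisting of continuous {0,1}-valued (hence locally constant) functions with supp h_i ⊆ U_i. -/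
/-!
A locally compact, totally disconnected Hausdorff space has a basis of compact open sets.
Transported along charts into a Hausdorff space, these stay compact, hence closed, and so form a
basis of clopen sets. In a Lindelöf space with such a basis, an open cover `U` is refined by a
sequence `C 0, C 1, …` of clopen sets; sending `x` to the least `n` with `x ∈ C n` is locally
constant. Choosing for each `n` an index `i` with `C n ⊆ U i` gives a locally constant map to the
index set, whose fibres are the required partition.
-/

open Set TopologicalSpace Topology

theorem exists_isCompact_isOpen_mem_subset {H : Type*} [TopologicalSpace H] [T2Space H]
    [LocallyCompactSpace H] [TotallyDisconnectedSpace H] {x : H} {U : Set H}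
    (hU : IsOpen U) (hx : x ∈ U) :
    ∃ C, IsCompact C ∧ IsOpen C ∧ x ∈ C ∧ C ⊆ U := by
  obtain ⟨Q, hQ, hxQ, hQU⟩ := exists_compact_subset hU hx
  obtain ⟨C, hC, hxC, hCQ⟩ := loc_compact_Haus_tot_disc_of_zero_dim.exists_subset_of_mem_open
    hxQ isOpen_interior
  have hCQ : C ⊆ Q := hCQ.trans interior_subset
  exact ⟨C, hQ.of_isClosed_subset hC.isClosed hCQ, hC.isOpen, hxC, hCQ.trans hQU⟩

section

variable {X : Type*} [TopologicalSpace X]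

theorem exists_isClopen_mem_subset_of_isOpenEmbedding {H : Type*} [TopologicalSpace H]
    [LocallyCompactSpace H] [TotallyDisconnectedSpace H] [T2Space X] {f : H → X}
    (hf : IsOpenEmbedding f) {y : H} {U : Set X} (hU : IsOpen U) (hy : f y ∈ U) :
    ∃ C, IsClopen C ∧ f y ∈ C ∧ C ⊆ U := by
  have : T2Space H := hf.isEmbedding.t2Space
  obtain ⟨C, hCc, hCo, hyC, hCU⟩ :=
    exists_isCompact_isOpen_mem_subset (hU.preimage hf.continuous) hy
  exact ⟨f '' C, ⟨(hCc.image hf.continuous).isClosed, hf.isOpenMap C hCo⟩,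
    mem_image_of_mem f hyC, image_subset_iff.2 hCU⟩

theorem isTopologicalBasis_isClopen_of_exists_homeomorph {E : Type*} [TopologicalSpace E]
    [LocallyCompactSpace E] [TotallyDisconnectedSpace E] [T2Space X]
    (hloc : ∀ x : X, ∃ (V : Set X) (W : Set E),
      x ∈ V ∧ IsOpen V ∧ IsOpen W ∧ Nonempty (V ≃ₜ W)) :
    IsTopologicalBasis {C : Set X | IsClopen C} := by
  refine isTopologicalBasis_of_isOpen_of_nhds (fun C hC => hC.isOpen) fun x U hx hU => ?_
  obtain ⟨V, W, hxV, hV, hW, ⟨e⟩⟩ := hloc x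
  have : LocallyCompactSpace W := hW.locallyCompactSpace
  have hf : IsOpenEmbedding (Subtype.val ∘ e.symm) :=
    hV.isOpenEmbedding_subtypeVal.comp e.symm.isOpenEmbedding
  simpa using
    exists_isClopen_mem_subset_of_isOpenEmbedding hf (y := e ⟨x, hxV⟩) hU (by simpa using hx)

theorem exists_locallyConstant_mem_of_isClopen {C : ℕ → Set X} (hC : ∀ n, IsClopen (C n))
    (hcov : ⋃ n, C n = univ) : ∃ f : LocallyConstant X ℕ, ∀ x, x ∈ C (f x) := by
  classical
  have hmem : ∀ x, ∃ n, x ∈ C n := iUnion_eq_univ_iff.1 hcov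
  refine ⟨⟨fun x => Nat.find (hmem x), IsLocallyConstant.iff_isOpen_fiber.2 fun n => ?_⟩,
    fun x => Nat.find_spec (hmem x)⟩
  rw [preimage_find_eq_disjointed C hmem]
  exact (disjointedRec (p := IsClopen) (fun _ m h => h.diff (hC m)) (hC n)).isOpen

theorem exists_locallyConstant_mem_of_isTopologicalBasis_isClopen [LindelofSpace X]
    (hX : IsTopologicalBasis {C : Set X | IsClopen C}) {ι : Type*} {U : ι → Set X}
    (hUo : ∀ i, IsOpen (U i)) (hUcov : ⋃ i, U i = univ) :
    ∃ f : LocallyConstant X ι, ∀ x, x ∈ U (f x) := by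
  choose i hi using iUnion_eq_univ_iff.1 hUcov
  choose C hC hxC hCU using fun x => hX.exists_subset_of_mem_open (hi x) (hUo (i x))
  cases isEmpty_or_nonempty X
  · exact ⟨⟨i, .of_discrete i⟩, hi⟩
  obtain ⟨t, htc, ht⟩ := countable_cover_nhds fun x => (hC x).isOpen.mem_nhds (hxC x)
  have htn : t.Nonempty := (nonempty_biUnion.1 (ht ▸ univ_nonempty)).imp fun _ h => h.1
  obtain ⟨c, rfl⟩ := htc.exists_eq_range htn
  obtain ⟨f, hf⟩ := exists_locallyConstant_mem_of_isClopen (fun n => hC (c n))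
    (by rwa [biUnion_range] at ht)
  exact ⟨f.map (i ∘ c), fun x => hCU _ (hf x)⟩

theorem stmt12_general [LindelofSpace X] (hX : IsTopologicalBasis {C : Set X | IsClopen C})
    {R : Type*} [TopologicalSpace R] [Zero R] [One R]
    {ι : Type*} (U : ι → Set X) (hUo : ∀ i, IsOpen (U i)) (hUcov : (⋃ i, U i) = univ) :
    ∃ V : ι → Set X,
      Pairwise (Function.onFun Disjoint V) ∧
      (∀ i, IsOpen (V i)) ∧ (∀ i, IsClosed (V i)) ∧
      (∀ i, V i ⊆ U i) ∧ (⋃ i, V i) = univ ∧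
      (∀ i, Continuous ((V i).indicator fun _ => (1 : R))) ∧
      (∀ i, tsupport ((V i).indicator fun _ => (1 : R)) ⊆ U i) := by
  obtain ⟨f, hf⟩ := exists_locallyConstant_mem_of_isTopologicalBasis_isClopen hX hUo hUcov
  have hV (i : ι) : IsClopen (f ⁻¹' {i}) := f.isLocallyConstant.isClopen_fiber i
  have hVU (i : ι) : f ⁻¹' {i} ⊆ U i := by
    rintro x rfl
    exact hf x
  refine ⟨fun i => f ⁻¹' {i}, pairwise_disjoint_fiber f, fun i => (hV i).isOpen,
    fun i => (hV i).isClosed, hVU, iUnion_eq_univ_iff.2 fun x => ⟨f x, rfl⟩,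
    fun i => (hV i).continuous_indicator continuous_const, fun i => ?_⟩
  exact (closure_minimal support_indicator_subset (hV i).isClosed).trans (hVU i)

end

theorem stmt12 {K : Type*} [NontriviallyNormedField K] [IsUltrametricDist K]
    [LocallyCompactSpace K] {d : ℕ}
    {M : Type*} [TopologicalSpace M] [T2Space M] [SigmaCompactSpace M]
    (hloc : ∀ x : M, ∃ (V : Set M) (W : Set (Fin d → K)),
      x ∈ V ∧ IsOpen V ∧ IsOpen W ∧ Nonempty (V ≃ₜ W))
    {ι : Type*} (U : ι → Set M) (hUo : ∀ i, IsOpen (U i))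
    (hUcov : (⋃ i, U i) = Set.univ) :
    ∃ V : ι → Set M,
      Pairwise (Function.onFun Disjoint V) ∧
      (∀ i, IsOpen (V i)) ∧ (∀ i, IsClosed (V i)) ∧
      (∀ i, V i ⊆ U i) ∧ (⋃ i, V i) = Set.univ ∧
      (∀ i, Continuous ((V i).indicator fun _ => (1 : K))) ∧
      (∀ i, tsupport ((V i).indicator fun _ => (1 : K)) ⊆ U i) :=
  stmt12_general (isTopologicalBasis_isClopen_of_exists_homeomorph hloc) U hUo hUcov
end

section
/- Let K be a complete, nonarchimedean, nontrivially normed field (‖x + y‖ ≤ max(‖x‖, ‖y‖)), let d ∈ ℕ, and let B = {x ∈ K^d : ‖x‖ ≤ 1} be the closed unit ball of K^d with the supremum norm. Let σ : B → K^d be a map with σ(B) ⊆ B, and suppose there is a constant c < 1 such that ‖σ(z) − σ(y)‖ ≤ c · ‖z − y‖ for all y, z ∈ B. Then the map γ : B → K^d, γ(x) = x + σ(x), is a bijection from B onto B which is an isometry: ‖γ(z) − γ(y)‖ = ‖z − y‖ for all y, z ∈ B. -/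
/-!
By ultrametricity the closed unit ball is a complete additive subgroup `H`. If `σ` maps `H`
into itself and contracts distances by a factor `c < 1`, then in
`(z + σ z) - (y + σ y) = (z - y) + (σ z - σ y)` the second summand is strictly smaller than the
first unless both vanish, so the sum has the norm of `z - y`. A preimage of `b ∈ H` under
`x ↦ x + σ x` is a fixed point of `x ↦ b - σ x`, a contraction of `H`.
-/

open Metric Set
open scoped NNReal

theorem norm_add_eq_left_of_norm_le_mul {E : Type*} [SeminormedAddGroup E] [IsUltrametricDist E]
    {c : ℝ} {x y : E} (hc : c < 1) (h : ‖y‖ ≤ c * ‖x‖) :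
    ‖x + y‖ = ‖x‖ := by
  rcases (norm_nonneg x).eq_or_lt' with hx | hx
  · have hy : ‖y‖ ≤ 0 := by simpa only [hx, mul_zero] using h
    have hxy : ‖x + y‖ ≤ 0 :=
      (IsUltrametricDist.norm_add_le_max x y).trans (max_le hx.le hy)
    rw [hx, hxy.antisymm (norm_nonneg _)]
  · have hlt : ‖y‖ < ‖x‖ := h.trans_lt (mul_lt_of_lt_one_left hx hc)
    rw [IsUltrametricDist.norm_add_eq_max_of_norm_ne_norm hlt.ne', max_eq_left hlt.le]

theorem norm_add_sub_add_eq_of_norm_sub_le_mul {E : Type*} [SeminormedAddCommGroup E]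
    [IsUltrametricDist E] {c : ℝ} {x y u v : E} (hc : c < 1) (h : ‖u - v‖ ≤ c * ‖x - y‖) :
    ‖(x + u) - (y + v)‖ = ‖x - y‖ := by
  rw [add_sub_add_comm, norm_add_eq_left_of_norm_le_mul hc h]

section Bijection

variable {E : Type*} [NormedAddCommGroup E] {H : AddSubgroup E} {σ : E → E}

theorem surjOn_id_add_of_lipschitzOnWith {k : ℝ≥0} (hH : IsComplete (H : Set E)) (hk : k < 1)
    (hmaps : MapsTo σ H H) (hlip : LipschitzOnWith k σ H) :
    SurjOn (fun x => x + σ x) H H := by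
  intro b hb
  have hmaps_sub : MapsTo (fun x => b - σ x) H H := fun x hx => H.sub_mem hb (hmaps hx)
  have hlip_sub : LipschitzOnWith k (fun x => b - σ x) H := fun x hx y hy => by
    simpa only [edist_sub_left] using hlip hx hy
  have hcontr : ContractingWith k (hmaps_sub.restrict _ _ _) :=
    ⟨hk, hlip_sub.mapsToRestrict hmaps_sub⟩
  obtain ⟨x, hx, hfix, -⟩ := hcontr.exists_fixedPoint' hH hmaps_sub H.zero_mem (edist_ne_top _ _)
  exact ⟨x, hx, (sub_eq_iff_eq_add.mp hfix.eq).symm⟩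

theorem stmt13_general [IsUltrametricDist E] (hH : IsComplete (H : Set E)) {c : ℝ} (hc : c < 1)
    (hmaps : ∀ x ∈ H, σ x ∈ H) (hlip : ∀ y ∈ H, ∀ z ∈ H, ‖σ z - σ y‖ ≤ c * ‖z - y‖) :
    BijOn (fun x => x + σ x) H H ∧
      ∀ y ∈ H, ∀ z ∈ H, ‖(z + σ z) - (y + σ y)‖ = ‖z - y‖ := by
  have hiso : ∀ y ∈ H, ∀ z ∈ H, ‖(z + σ z) - (y + σ y)‖ = ‖z - y‖ := fun y hy z hz =>
    norm_add_sub_add_eq_of_norm_sub_le_mul hc (hlip y hy z hz)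
  have hinj : InjOn (fun x => x + σ x) H := fun z hz y hy hzy => by
    rw [← sub_eq_zero, ← norm_eq_zero, ← hiso y hy z hz, norm_eq_zero, sub_eq_zero]
    exact hzy
  have hlipOn : LipschitzOnWith c.toNNReal σ H := .of_dist_le' fun z hz y hy => by
    simpa only [dist_eq_norm] using hlip y hy z hz
  have hsurj : SurjOn (fun x => x + σ x) H H :=
    surjOn_id_add_of_lipschitzOnWith hH (Real.toNNReal_lt_one.mpr hc) hmaps hlipOn
  exact ⟨⟨fun x hx => H.add_mem hx (hmaps x hx), hinj, hsurj⟩, hiso⟩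

end Bijection

theorem stmt13 {K : Type*} [NontriviallyNormedField K] [CompleteSpace K]
    [IsUltrametricDist K] {d : ℕ}
    (σ : (Fin d → K) → (Fin d → K)) {c : ℝ} (hc : c < 1)
    (hmaps : ∀ x ∈ Metric.closedBall (0 : Fin d → K) 1,
      σ x ∈ Metric.closedBall (0 : Fin d → K) 1)
    (hlip : ∀ y ∈ Metric.closedBall (0 : Fin d → K) 1,
      ∀ z ∈ Metric.closedBall (0 : Fin d → K) 1, ‖σ z - σ y‖ ≤ c * ‖z - y‖) :
    Set.BijOn (fun x => x + σ x) (Metric.closedBall (0 : Fin d → K) 1)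
        (Metric.closedBall (0 : Fin d → K) 1) ∧
      ∀ y ∈ Metric.closedBall (0 : Fin d → K) 1,
        ∀ z ∈ Metric.closedBall (0 : Fin d → K) 1,
          ‖(z + σ z) - (y + σ y)‖ = ‖z - y‖ :=
  stmt13_general
    (H := (IsUltrametricDist.closedBall_openAddSubgroup (Fin d → K) one_pos).toAddSubgroup)
    isClosed_closedBall.isComplete hc hmaps hlip
end

section
/- Let E and F be real normed spaces and U ⊆ E an open subset. A map f : U → F is smooth (C^∞, i.e. ContDiffOn ℝ ⊤ f U) if and only if for every smooth curve c : ℝ → E with range contained in U, the composition f ∘ c : ℝ → F is smooth. -/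
/-!
Gluing smoothly a sequence of affine pieces that converges very fast to a point produces a smooth
curve passing through them. If some iterated line derivative of `f` were unbounded near a point, `f`
would fail to be smooth along such a curve; hence they are all locally bounded, and the
one-dimensional Taylor formula along segments gives, locally uniformly in `x` and for all `n`,
`f (x + h) = ∑ j < n, q j x h + O(‖h‖ ^ n)` with `q j x` homogeneous of degree `j`.

Such expansions force `f` to be smooth. Comparing them with Djoković's identity, which expresses
mixed differences through iterated ones, shows that the `k`-fold mixed differences of `q j x` vanish
for `j < k`. Hence those of `q k x` at `0` form a symmetric multilinear map, and comparing the
expansions at `x` and `x + h` identifies these maps as the successive Fréchet derivatives of `f`.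
-/

open Set Filter Topology Asymptotics
open scoped ContDiff

namespace Boman

section MixedDifference

open Finset

variable {ι κ M G : Type*}

/-- The mixed forward difference `Δ_[v i₁] ⋯ Δ_[v iₙ] f x`, where `i₁, …, iₙ` are the elements of
`s`. The expanded sum is taken as the definition because it does not depend on an ordering
of `s`. -/
def mixedFwdDiff [AddCommMonoid M] [AddCommGroup G] (s : Finset ι) (v : ι → M) (f : M → G)
    (x : M) : G :=
  ∑ t ∈ s.powerset, (-1 : ℤ) ^ (#s + #t) • f (x + ∑ i ∈ t, v i)

section AddCommMonoid

variable [AddCommMonoid M] [AddCommGroup G]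

lemma mixedFwdDiff_empty (v : ι → M) (f : M → G) : mixedFwdDiff ∅ v f = f := by
  ext x
  simp [mixedFwdDiff]

lemma mixedFwdDiff_congr {s : Finset ι} {v w : ι → M} (h : ∀ i ∈ s, v i = w i) (f : M → G) :
    mixedFwdDiff s v f = mixedFwdDiff s w f := by
  ext x
  refine sum_congr rfl fun t ht => ?_
  rw [sum_congr rfl fun i hi => h i (mem_powerset.1 ht hi)]

lemma mixedFwdDiff_insert [DecidableEq ι] {s : Finset ι} {i : ι} (hi : i ∉ s) (v : ι → M)
    (f : M → G) : mixedFwdDiff (insert i s) v f = fwdDiff (v i) (mixedFwdDiff s v f) := by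
  ext x
  have h_notMem {t : Finset ι} (ht : t ∈ s.powerset) : i ∉ t := fun h => hi (mem_powerset.1 ht h)
  rw [fwdDiff, mixedFwdDiff, sum_powerset_insert hi, add_comm, sub_eq_add_neg, mixedFwdDiff,
    mixedFwdDiff, ← sum_neg_distrib]
  congr 1 <;> refine sum_congr rfl fun t ht => ?_
  · rw [card_insert_of_notMem hi, card_insert_of_notMem (h_notMem ht), sum_insert (h_notMem ht),
      add_assoc x, ← add_add_add_comm, pow_add _ _ (1 + 1)]
    norm_num
  · rw [card_insert_of_notMem hi, add_right_comm, pow_succ]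
    simp

lemma mixedFwdDiff_map (e : ι ↪ κ) (s : Finset ι) (v : κ → M) (f : M → G) :
    mixedFwdDiff (s.map e) v f = mixedFwdDiff s (v ∘ e) f := by
  classical
  induction s using Finset.induction_on with
  | empty => simp only [map_empty, mixedFwdDiff_empty]
  | insert i s hi ih =>
    rw [map_insert, mixedFwdDiff_insert (by simpa using hi), mixedFwdDiff_insert hi, ih,
      Function.comp_apply]

lemma mixedFwdDiff_univ_cons {n : ℕ} (h : M) (v : Fin n → M) (f : M → G) :
    mixedFwdDiff univ (Fin.cons h v : Fin (n + 1) → M) f = fwdDiff h (mixedFwdDiff univ v f) := by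
  rw [Fin.univ_succ, cons_eq_insert, mixedFwdDiff_insert (by simp), mixedFwdDiff_map]
  rfl

lemma mixedFwdDiff_const (s : Finset ι) (h : M) (f : M → G) :
    mixedFwdDiff s (fun _ => h) f = (fwdDiff h)^[#s] f := by
  classical
  induction s using Finset.induction_on with
  | empty => simp only [mixedFwdDiff_empty, Finset.card_empty, Function.iterate_zero, id]
  | insert i s hi ih =>
    rw [mixedFwdDiff_insert hi, ih, card_insert_of_notMem hi, Function.iterate_succ_apply']

lemma mixedFwdDiff_eq_zero_of_apply_eq_zero {s : Finset ι} {v : ι → M} {i : ι} (hi : i ∈ s)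
    (hv : v i = 0) (f : M → G) : mixedFwdDiff s v f = 0 := by
  classical
  rw [← insert_erase hi, mixedFwdDiff_insert (notMem_erase i s), hv]
  ext x
  simp [fwdDiff]

lemma mixedFwdDiff_update_add [DecidableEq ι] {s : Finset ι} {i : ι} (hi : i ∈ s) (v : ι → M)
    (f : M → G) (a b x : M) :
    mixedFwdDiff s (Function.update v i (a + b)) f x =
      mixedFwdDiff s (Function.update v i a) f x + mixedFwdDiff s (Function.update v i b) f x +
        fwdDiff b (mixedFwdDiff s (Function.update v i a) f) x := by
  have h_update (c : M) : mixedFwdDiff s (Function.update v i c) f =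
      fwdDiff c (mixedFwdDiff (s.erase i) v f) := by
    nth_rw 1 [← insert_erase hi]
    rw [mixedFwdDiff_insert (notMem_erase i s), Function.update_self]
    congr 1
    exact mixedFwdDiff_congr
      (fun j hj => Function.update_of_ne (ne_of_mem_erase hj) _ _) f
  simp only [h_update, fwdDiff, ← add_assoc, add_right_comm x b a]
  abel

lemma mixedFwdDiff_comp_add_left (s : Finset ι) (v : ι → M) (f : M → G) (x a : M) :
    mixedFwdDiff s v (fun h => f (x + h)) a = mixedFwdDiff s v f (x + a) := by
  simp only [mixedFwdDiff, add_assoc]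

lemma mixedFwdDiff_sub (s : Finset ι) (v : ι → M) (f g : M → G) (x : M) :
    mixedFwdDiff s v (fun h => f h - g h) x = mixedFwdDiff s v f x - mixedFwdDiff s v g x := by
  simp only [mixedFwdDiff, smul_sub, sum_sub_distrib]

lemma mixedFwdDiff_finsetSum {α : Type*} (s : Finset ι) (v : ι → M) (r : Finset α)
    (f : α → M → G) (x : M) :
    mixedFwdDiff s v (fun h => ∑ j ∈ r, f j h) x = ∑ j ∈ r, mixedFwdDiff s v (f j) x := by
  simp only [mixedFwdDiff, smul_sum]
  exact sum_comm

end AddCommMonoid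

section Homogeneous

variable [AddCommGroup M] [Module ℝ M] [AddCommGroup G] [Module ℝ G] {q : M → G} {d : ℕ}

lemma mixedFwdDiff_smul_of_homogeneous (hq : ∀ (c : ℝ) h, q (c • h) = c ^ d • q h)
    (s : Finset ι) (c : ℝ) (v : ι → M) (x : M) :
    mixedFwdDiff s (c • v) q (c • x) = c ^ d • mixedFwdDiff s v q x := by
  simp only [mixedFwdDiff, Pi.smul_apply, ← smul_sum, ← smul_add, hq, smul_comm _ (c ^ d)]

lemma fwdDiff_iter_zero_of_homogeneous (hq : ∀ (c : ℝ) h, q (c • h) = c ^ d • q h)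
    (n : ℕ) (h : M) :
    (fwdDiff h)^[n] q 0 = (fwdDiff (1 : ℝ))^[n] (fun r => r ^ d) 0 • q h := by
  simp only [fwdDiff_iter_eq_sum_shift, zero_add, ← Nat.cast_smul_eq_nsmul ℝ, hq, sum_smul,
    smul_eq_mul, mul_one, smul_assoc]

end Homogeneous

-- Djoković's identity. Exchanging the two sums leaves, for `0 < k ≤ n`, a mixed difference in
-- which the vector `(1 - k / j) • v j` with `j = k` vanishes; only the term `k = 0` survives.
theorem mixedFwdDiff_univ_eq_sum_fwdDiff_iter [AddCommGroup M] [Module ℝ M] [AddCommGroup G]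
    {n : ℕ} (v : Fin n → M) (f : M → G) (x : M) :
    mixedFwdDiff univ v f x = ∑ t : Finset (Fin n), (-1 : ℤ) ^ #t •
      (fwdDiff (-∑ i ∈ t, ((i : ℝ) + 1)⁻¹ • v i))^[n] f (x + ∑ i ∈ t, v i) := by
  have h_point (k : ℕ) (t : Finset (Fin n)) :
      x + ∑ i ∈ t, v i + k • -∑ i ∈ t, ((i : ℝ) + 1)⁻¹ • v i =
        x + ∑ i ∈ t, (1 - k * ((i : ℝ) + 1)⁻¹) • v i := by
    simp only [sub_smul, one_smul, mul_smul, sum_sub_distrib, ← smul_sum,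
      ← Nat.cast_smul_eq_nsmul ℝ]
    module
  have h_vanish (k : ℕ) (hk : k < n) :
      mixedFwdDiff univ (fun i : Fin n => (1 - (k + 1 : ℕ) * ((i : ℝ) + 1)⁻¹) • v i) f x = 0 := by
    rw [mixedFwdDiff_eq_zero_of_apply_eq_zero (mem_univ ⟨k, hk⟩), Pi.zero_apply]
    simp [Nat.cast_add_one_ne_zero]
  have h_sum (k : ℕ) :
      ∑ t : Finset (Fin n), (-1 : ℤ) ^ #t • f (x + ∑ i ∈ t, (1 - k * ((i : ℝ) + 1)⁻¹) • v i) =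
        (-1 : ℤ) ^ n •
          mixedFwdDiff univ (fun i : Fin n => (1 - k * ((i : ℝ) + 1)⁻¹) • v i) f x := by
    have h_sign (m : ℕ) : (-1 : ℤ) ^ (n + n + m) = (-1) ^ m := by
      rw [pow_add, (Even.add_self n).neg_one_pow, one_mul]
    simp only [mixedFwdDiff, Finset.powerset_univ, smul_sum, smul_smul, Finset.card_univ,
      Fintype.card_fin, ← pow_add, ← add_assoc, h_sign]
  symm
  calc ∑ t : Finset (Fin n), (-1 : ℤ) ^ #t •
        (fwdDiff (-∑ i ∈ t, ((i : ℝ) + 1)⁻¹ • v i))^[n] f (x + ∑ i ∈ t, v i)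
    _ = ∑ k ∈ range (n + 1), ((-1 : ℤ) ^ (n - k) * n.choose k) • ∑ t : Finset (Fin n),
          (-1 : ℤ) ^ #t • f (x + ∑ i ∈ t, (1 - k * ((i : ℝ) + 1)⁻¹) • v i) := by
      simp only [fwdDiff_iter_eq_sum_shift, h_point, smul_sum]
      rw [sum_comm]
      simp only [smul_comm ((-1 : ℤ) ^ _)]
    _ = mixedFwdDiff univ v f x := by
      simp only [h_sum]
      rw [sum_range_succ', sum_eq_zero fun k hk => by
        rw [h_vanish k (mem_range.1 hk), smul_zero, smul_zero]]
      simp [smul_smul, ← pow_add, Even.add_self]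

end MixedDifference

lemma isBigO_neg_one_pow_zsmul {α G : Type*} [NormedAddCommGroup G] {l : Filter α} {m : ℕ}
    {u : α → G} {g : α → ℝ} :
    (fun a => (-1 : ℤ) ^ m • u a) =O[l] g ↔ u =O[l] g := by
  rcases neg_one_pow_eq_or ℤ m with h | h <;> simp [h]

lemma eventually_add_fst_mem {X Y : Type*} [TopologicalSpace X] [AddMonoid X] [ContinuousAdd X]
    [TopologicalSpace Y] [Zero Y] {U : Set X} {x : X} (hU : IsOpen U) (hx : x ∈ U) :
    ∀ᶠ p : X × Y in 𝓝 0, x + p.1 ∈ U := by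
  have : Continuous fun p : X × Y => x + p.1 := by fun_prop
  exact this.continuousAt.eventually_mem (hU.mem_nhds (by simpa using hx))

section ConverseTaylor

open Finset (range univ)

variable {E F : Type*} [NormedAddCommGroup E] [NormedSpace ℝ E]
  [NormedAddCommGroup F] [NormedSpace ℝ F]

lemma eq_zero_of_sum_pow_smul_isBigO {n : ℕ} {c : ℕ → F}
    (h : (fun t : ℝ => ∑ j ∈ range n, t ^ j • c j) =O[𝓝[≠] 0] fun t => t ^ n) {j : ℕ}
    (hj : j < n) : c j = 0 := by
  induction n generalizing c j with
  | zero => exact absurd hj j.not_lt_zero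
  | succ n ih =>
    have h_split (t : ℝ) : ∑ j ∈ range (n + 1), t ^ j • c j =
        t • ∑ j ∈ range n, t ^ j • c (j + 1) + c 0 := by
      simp only [Finset.sum_range_succ', Finset.smul_sum, smul_smul, ← pow_succ', pow_zero,
        one_smul]
    simp only [h_split] at h
    have h₀ : c 0 = 0 := by
      have h_zero : Tendsto (fun t : ℝ => t ^ (n + 1)) (𝓝[≠] 0) (𝓝 0) := by
        simpa using ((continuous_pow (n + 1)).tendsto (0 : ℝ)).mono_left nhdsWithin_le_nhds
      have h_const : Tendsto (fun t : ℝ => t • ∑ j ∈ range n, t ^ j • c (j + 1) + c 0)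
          (𝓝[≠] 0) (𝓝 (c 0)) := by
        have : Continuous fun t : ℝ => t • ∑ j ∈ range n, t ^ j • c (j + 1) + c 0 := by fun_prop
        simpa using (this.tendsto 0).mono_left nhdsWithin_le_nhds
      exact tendsto_nhds_unique h_const (h.trans_tendsto h_zero)
    have h_shift : (fun t : ℝ => ∑ j ∈ range n, t ^ j • c (j + 1)) =O[𝓝[≠] 0] fun t => t ^ n := by
      refine ((isBigO_refl (fun t : ℝ => t⁻¹) _).smul h).congr' ?_ ?_ <;>
        filter_upwards [self_mem_nhdsWithin] with t (ht : t ≠ 0)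
      · rw [h₀, add_zero, inv_smul_smul₀ ht]
      · rw [smul_eq_mul, pow_succ', inv_mul_cancel_left₀ ht]
    cases j with
    | zero => exact h₀
    | succ j => exact ih h_shift (Nat.succ_lt_succ_iff.1 hj)

lemma exists_norm_le_mul_pow_of_isBigO {g : E → F} {n : ℕ}
    (hg : ∀ (c : ℝ) v, g (c • v) = c ^ n • g v) (h : g =O[𝓝 0] fun v => ‖v‖ ^ n) :
    ∃ C ≥ 0, ∀ v, ‖g v‖ ≤ C * ‖v‖ ^ n := by
  obtain ⟨C, hC₀, hC⟩ := h.exists_nonneg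
  refine ⟨C, hC₀, fun v => ?_⟩
  have h_line : Tendsto (fun t : ℝ => t • v) (𝓝[≠] 0) (𝓝 0) := by
    have : Continuous fun t : ℝ => t • v := by fun_prop
    simpa using (this.tendsto 0).mono_left nhdsWithin_le_nhds
  obtain ⟨t, ht, ht₀⟩ := ((h_line.eventually hC.bound).and self_mem_nhdsWithin).exists
  have ht_pos : 0 < ‖t‖ ^ n := pow_pos (norm_pos_iff.2 ht₀) n
  rw [hg, norm_smul, norm_pow, norm_pow, norm_norm, norm_smul, mul_pow, mul_left_comm] at ht
  exact le_of_mul_le_mul_left ht ht_pos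

lemma norm_le_mul_prod_of_forall_norm_le {ι : Type*} [Fintype ι]
    (M : MultilinearMap ℝ (fun _ : ι => E) F) {r B : ℝ} (hr : 0 < r)
    (hM : ∀ v, ‖v‖ ≤ r → ‖M v‖ ≤ B * r ^ Fintype.card ι) (v : ι → E) :
    ‖M v‖ ≤ B * ∏ i, ‖v i‖ := by
  by_cases hv : ∃ i, v i = 0
  · obtain ⟨i, hi⟩ := hv
    rw [M.map_coord_zero i hi, Finset.prod_eq_zero (Finset.mem_univ i) (by rw [hi, norm_zero]),
      norm_zero, mul_zero]
  have hv_pos (i : ι) : 0 < ‖v i‖ := norm_pos_iff.2 fun hi => hv ⟨i, hi⟩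
  have h_norm : ‖fun i => (r / ‖v i‖) • v i‖ ≤ r := by
    refine (pi_norm_le_iff_of_nonneg hr.le).2 fun i => ?_
    rw [norm_smul, norm_div, norm_norm, Real.norm_of_nonneg hr.le, div_mul_cancel₀ _ (hv_pos i).ne']
  have h_scaled := hM _ h_norm
  have h_prod : 0 < ∏ i, ‖v i‖ := Finset.prod_pos fun i _ => hv_pos i
  rw [M.map_smul_univ, norm_smul, Finset.prod_div_distrib, Finset.prod_const, Finset.card_univ,
    Real.norm_of_nonneg (by positivity), div_mul_eq_mul_div, div_le_iff₀ h_prod] at h_scaled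
  exact le_of_mul_le_mul_left (by linarith) (pow_pos hr (Fintype.card ι))

lemma isBigO_of_apply_isBigO {k d : ℕ} {M : E → E [×k]→L[ℝ] F} (h₀ : M 0 = 0)
    (hM : (fun p : E × (Fin k → E) => M p.1 p.2) =O[𝓝 0] fun p => ‖p‖ ^ (k + d)) :
    M =O[𝓝 0] fun h => ‖h‖ ^ d := by
  obtain ⟨C, hC₀, hC⟩ := hM.exists_nonneg
  obtain ⟨δ, hδ, h_ball⟩ := Metric.eventually_nhds_iff.1 hC.bound
  refine .of_bound C (Metric.eventually_nhds_iff.2 ⟨δ, hδ, fun h hh => ?_⟩)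
  rcases eq_or_ne h 0 with rfl | h_ne
  · rw [h₀, norm_zero]
    positivity
  refine (M h).opNorm_le_bound (by positivity) ?_
  refine norm_le_mul_prod_of_forall_norm_le (M h).toMultilinearMap (norm_pos_iff.2 h_ne)
    fun v hv => ?_
  have h_pair : ‖(h, v)‖ = ‖h‖ := by rw [Prod.norm_mk, max_eq_left hv]
  have h_le := h_ball (y := (h, v)) (by rwa [dist_zero_right, h_pair, ← dist_zero_right])
  rw [h_pair, norm_pow, norm_norm] at h_le
  rw [norm_pow, norm_norm, Fintype.card_fin, mul_assoc, ← pow_add, add_comm d]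
  exact h_le

theorem exists_continuousMultilinearMap_coe_eq {ι : Type*} [Fintype ι] [DecidableEq ι]
    {g : (ι → E) → F} {C : ℝ} (hC : 0 ≤ C)
    (h_add : ∀ v i a b, g (Function.update v i (a + b)) =
      g (Function.update v i a) + g (Function.update v i b))
    (h_le : ∀ v, ‖g v‖ ≤ C * ‖v‖ ^ Fintype.card ι) :
    ∃ M : ContinuousMultilinearMap ℝ (fun _ : ι => E) F, ⇑M = g := by
  have h_smul (v : ι → E) (i : ι) (c : ℝ) (a : E) :
      g (Function.update v i (c • a)) = c • g (Function.update v i a) := by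
    let A : E →+ F := .mk' (fun a => g (Function.update v i a)) (h_add v i)
    have hA : Continuous A := by
      refine A.continuous_of_isBounded_nhds_zero (Metric.ball_mem_nhds 0 one_pos) ?_
      refine (Metric.isBounded_closedBall
        (x := (0 : F)) (r := C * max ‖v‖ 1 ^ Fintype.card ι)).subset ?_
      rintro _ ⟨b, hb, rfl⟩
      rw [mem_closedBall_zero_iff]
      refine (h_le _).trans ?_
      gcongr
      refine (pi_norm_le_iff_of_nonneg (by positivity)).2 fun j => ?_
      rcases eq_or_ne j i with rfl | hj
      · rw [Function.update_self]
        exact (mem_ball_zero_iff.1 hb).le.trans (le_max_right _ _)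
      · rw [Function.update_of_ne hj]
        exact (norm_le_pi_norm v j).trans (le_max_left _ _)
    exact map_real_smul A hA c a
  let M : MultilinearMap ℝ (fun _ : ι => E) F :=
    .mk' g (fun v i a b => h_add v i a b) fun v i c a => h_smul v i c a
  refine ⟨M.mkContinuous C (norm_le_mul_prod_of_forall_norm_le M one_pos fun v hv => ?_), rfl⟩
  exact (h_le v).trans (by gcongr)

/-- Taylor expansions of all orders `f (x + h) = ∑ j < n, q j x h + O(‖h‖ ^ n)`, locally uniform in
`x ∈ U`. The terms `q j x` are only required to be homogeneous of degree `j`; that they are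
polynomials is a consequence. -/
structure HasHomogeneousExpansionOn (f : E → F) (q : ℕ → E → E → F) (U : Set E) : Prop where
  map_smul : ∀ j, ∀ x ∈ U, ∀ (c : ℝ) h, q j x (c • h) = c ^ j • q j x h
  isBigO : ∀ n, ∀ x ∈ U, (fun p : E × E => f (p.1 + p.2) - ∑ j ∈ range n, q j p.1 p.2)
    =O[𝓝 (x, 0)] fun p => ‖p.2‖ ^ n

namespace HasHomogeneousExpansionOn

variable {f : E → F} {q : ℕ → E → E → F} {U : Set E} {x : E}

lemma mixedFwdDiff_remainder_isBigO (hf : HasHomogeneousExpansionOn f q U) (hx : x ∈ U)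
    (n k : ℕ) :
    (fun p : E × E × (Fin k → E) => mixedFwdDiff univ p.2.2 f (p.1 + p.2.1) -
        ∑ j ∈ range n, mixedFwdDiff univ p.2.2 (q j p.1) p.2.1)
      =O[𝓝 (x, 0)] fun p => ‖p.2‖ ^ n := by
  have h_eq (p : E × E × (Fin k → E)) : mixedFwdDiff univ p.2.2 f (p.1 + p.2.1) -
      ∑ j ∈ range n, mixedFwdDiff univ p.2.2 (q j p.1) p.2.1 =
      mixedFwdDiff univ p.2.2 (fun h => f (p.1 + h) - ∑ j ∈ range n, q j p.1 h) p.2.1 := by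
    rw [mixedFwdDiff_sub, mixedFwdDiff_comp_add_left, mixedFwdDiff_finsetSum]
  refine IsBigO.congr_left ?_ fun p => (h_eq p).symm
  simp only [mixedFwdDiff]
  refine .fun_sum fun t _ => ?_
  rw [isBigO_neg_one_pow_zsmul]
  have h_tendsto : Tendsto (fun p : E × E × (Fin k → E) => (p.1, p.2.1 + ∑ i ∈ t, p.2.2 i))
      (𝓝 (x, 0)) (𝓝 (x, 0)) := by
    have : Continuous fun p : E × E × (Fin k → E) => (p.1, p.2.1 + ∑ i ∈ t, p.2.2 i) := by
      fun_prop
    simpa using this.tendsto (x, 0)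
  refine ((hf.isBigO n x hx).comp_tendsto h_tendsto).trans (.pow ?_ n)
  refine .norm_left (.norm_right (.add ?_ (.fun_sum fun i _ => ?_)))
  · exact isBigO_of_le _ fun p => norm_fst_le p.2
  · exact isBigO_of_le _ fun p => (norm_le_pi_norm p.2.2 i).trans (norm_snd_le p.2)

lemma fwdDiff_iter_isBigO (hf : HasHomogeneousExpansionOn f q U) (hU : IsOpen U) (hx : x ∈ U)
    (n : ℕ) : (fun p : E × E => (fwdDiff p.2)^[n] f p.1) =O[𝓝 (x, 0)] fun p => ‖p.2‖ ^ n := by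
  have h_tendsto : Tendsto (fun p : E × E => (p.1, (0 : E), fun _ : Fin n => p.2))
      (𝓝 (x, 0)) (𝓝 (x, 0)) := by
    have : Continuous fun p : E × E => (p.1, ((0 : E), fun _ : Fin n => p.2)) := by fun_prop
    exact this.tendsto (x, 0)
  have h_norm (p : E × E) : ‖((0 : E), fun _ : Fin n => p.2)‖ ≤ ‖p.2‖ :=
    norm_prod_le_iff.2 ⟨by simp, pi_norm_const_le p.2⟩
  refine (((hf.mixedFwdDiff_remainder_isBigO hx n n).comp_tendsto h_tendsto).trans
    (.of_norm_le fun p => ?_)).congr' ?_ .rfl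
  · simpa using pow_le_pow_left₀ (norm_nonneg _) (h_norm p) n
  · have hU_near : ∀ᶠ p : E × E in 𝓝 (x, 0), p.1 ∈ U := continuousAt_fst (hU.mem_nhds hx)
    filter_upwards [hU_near] with p hp
    have h_term (j : ℕ) (hj : j ∈ range n) :
        mixedFwdDiff univ (fun _ : Fin n => p.2) (q j p.1) 0 = 0 := by
      rw [mixedFwdDiff_const, Finset.card_univ, Fintype.card_fin,
        fwdDiff_iter_zero_of_homogeneous (hf.map_smul j p.1 hp),
        fwdDiff_iter_pow_eq_zero_of_lt (Finset.mem_range.1 hj), Pi.zero_apply, zero_smul]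
    rw [Function.comp_apply, Finset.sum_eq_zero h_term, sub_zero, add_zero, mixedFwdDiff_const,
      Finset.card_univ, Fintype.card_fin]

lemma mixedFwdDiff_isBigO (hf : HasHomogeneousExpansionOn f q U) (hU : IsOpen U) (hx : x ∈ U)
    (n : ℕ) : (fun p : E × (Fin n → E) => mixedFwdDiff univ p.2 f p.1)
      =O[𝓝 (x, 0)] fun p => ‖p.2‖ ^ n := by
  simp only [mixedFwdDiff_univ_eq_sum_fwdDiff_iter]
  refine .fun_sum fun t _ => ?_
  rw [isBigO_neg_one_pow_zsmul]
  have h_tendsto : Tendsto (fun p : E × (Fin n → E) =>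
      (p.1 + ∑ i ∈ t, p.2 i, -∑ i ∈ t, ((i : ℝ) + 1)⁻¹ • p.2 i)) (𝓝 (x, 0)) (𝓝 (x, 0)) := by
    have : Continuous fun p : E × (Fin n → E) =>
        (p.1 + ∑ i ∈ t, p.2 i, -∑ i ∈ t, ((i : ℝ) + 1)⁻¹ • p.2 i) := by fun_prop
    simpa using this.tendsto (x, 0)
  refine ((hf.fwdDiff_iter_isBigO hU hx n).comp_tendsto h_tendsto).trans (.pow ?_ n)
  refine .norm_left (.norm_right (.neg_left (.fun_sum fun i _ => ?_)))
  refine .const_smul_left ?_ ((i : ℝ) + 1)⁻¹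
  exact isBigO_of_le _ fun p => norm_le_pi_norm p.2 i

theorem mixedFwdDiff_eq_zero_of_lt (hf : HasHomogeneousExpansionOn f q U) (hU : IsOpen U)
    (hx : x ∈ U) {j n : ℕ} (hj : j < n) (v : Fin n → E) (a : E) :
    mixedFwdDiff univ v (q j x) a = 0 := by
  refine eq_zero_of_sum_pow_smul_isBigO (c := fun j => mixedFwdDiff univ v (q j x) a) ?_ hj
  have h_base : Tendsto (fun t : ℝ => (x, t • a, t • v)) (𝓝[≠] 0) (𝓝 (x, 0)) := by
    have : Continuous fun t : ℝ => (x, t • a, t • v) := by fun_prop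
    simpa [← Prod.zero_eq_mk] using (this.tendsto 0).mono_left nhdsWithin_le_nhds
  have h_shift : Tendsto (fun t : ℝ => (x + t • a, t • v)) (𝓝[≠] 0) (𝓝 (x, 0)) := by
    have : Continuous fun t : ℝ => (x + t • a, t • v) := by fun_prop
    simpa using (this.tendsto 0).mono_left nhdsWithin_le_nhds
  have h_norm {X : Type _} [NormedAddCommGroup X] [NormedSpace ℝ X] (y : X) :
      (fun t : ℝ => ‖t • y‖ ^ n) =O[𝓝[≠] 0] fun t => t ^ n := by
    refine .pow (.norm_left ?_) n
    exact (isBigO_refl (fun t : ℝ => t) _).smul (isBigO_const_const y (one_ne_zero (α := ℝ)) _)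
      |>.congr_right fun t => mul_one t
  have h_f := ((hf.mixedFwdDiff_isBigO hU hx n).comp_tendsto h_shift).trans (h_norm v)
  have h_remainder :=
    ((hf.mixedFwdDiff_remainder_isBigO hx n n).comp_tendsto h_base).trans (h_norm (a, v))
  refine (h_f.sub h_remainder).congr_left fun t => ?_
  simp only [Function.comp_apply, mixedFwdDiff_smul_of_homogeneous (hf.map_smul _ x hx)]
  abel

lemma sum_mixedFwdDiff_sub_isBigO (hf : HasHomogeneousExpansionOn f q U) (hx : x ∈ U) (n k : ℕ) :
    (fun p : E × (Fin k → E) => ∑ j ∈ range n, mixedFwdDiff univ p.2 (q j (x + p.1)) 0 -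
        ∑ j ∈ range n, mixedFwdDiff univ p.2 (q j x) p.1)
      =O[𝓝 0] fun p => ‖p‖ ^ n := by
  have h_base : Tendsto (fun p : E × (Fin k → E) => (x, p)) (𝓝 0) (𝓝 (x, 0)) := by
    have : Continuous fun p : E × (Fin k → E) => (x, p) := by fun_prop
    exact this.tendsto 0
  have h_shift : Tendsto (fun p : E × (Fin k → E) => (x + p.1, (0 : E), p.2)) (𝓝 0)
      (𝓝 (x, 0)) := by
    have : Continuous fun p : E × (Fin k → E) => (x + p.1, (0 : E), p.2) := by fun_prop
    simpa [← Prod.zero_eq_mk] using this.tendsto 0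
  have h_remainder := hf.mixedFwdDiff_remainder_isBigO hx n k
  have h_norm (p : E × (Fin k → E)) : ‖((0 : E), p.2)‖ ≤ ‖p‖ :=
    norm_prod_le_iff.2 ⟨by simp, norm_snd_le p⟩
  have h_shift_le : (fun p : E × (Fin k → E) => ‖((0 : E), p.2)‖ ^ n) =O[𝓝 0] fun p => ‖p‖ ^ n :=
    .pow (.norm_left (.norm_right (isBigO_of_le _ h_norm))) n
  refine ((h_remainder.comp_tendsto h_base).sub
    ((h_remainder.comp_tendsto h_shift).trans h_shift_le)).congr_left fun p => ?_
  simp only [Function.comp_apply, add_zero]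
  abel

lemma mixedFwdDiff_apply_eq_apply_zero (hf : HasHomogeneousExpansionOn f q U) (hU : IsOpen U)
    (hx : x ∈ U) {k : ℕ} (v : Fin k → E) (h : E) :
    mixedFwdDiff univ v (q k x) h = mixedFwdDiff univ v (q k x) 0 := by
  have h_zero := hf.mixedFwdDiff_eq_zero_of_lt hU hx k.lt_succ_self (Fin.cons h v) 0
  rwa [mixedFwdDiff_univ_cons, fwdDiff, zero_add, sub_eq_zero] at h_zero

lemma sum_range_mixedFwdDiff_eq_zero (hf : HasHomogeneousExpansionOn f q U) (hU : IsOpen U)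
    (hx : x ∈ U) {k : ℕ} (v : Fin k → E) (a : E) :
    ∑ j ∈ range k, mixedFwdDiff univ v (q j x) a = 0 :=
  Finset.sum_eq_zero fun _ hj => hf.mixedFwdDiff_eq_zero_of_lt hU hx (Finset.mem_range.1 hj) v a

lemma mixedFwdDiff_sub_isBigO (hf : HasHomogeneousExpansionOn f q U) (hU : IsOpen U)
    (hx : x ∈ U) (k : ℕ) :
    (fun p : E × (Fin k → E) => mixedFwdDiff univ p.2 (q k (x + p.1)) 0 -
      mixedFwdDiff univ p.2 (q k x) 0) =O[𝓝 0] fun p => ‖p‖ ^ (k + 1) := by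
  refine (hf.sum_mixedFwdDiff_sub_isBigO hx (k + 1) k).congr' ?_ .rfl
  filter_upwards [eventually_add_fst_mem hU hx] with p hp
  rw [Finset.sum_range_succ, Finset.sum_range_succ, hf.sum_range_mixedFwdDiff_eq_zero hU hp,
    hf.sum_range_mixedFwdDiff_eq_zero hU hx, zero_add, zero_add,
    hf.mixedFwdDiff_apply_eq_apply_zero hU hx]

lemma apply_add_sub_isBigO (hf : HasHomogeneousExpansionOn f q U) (hU : IsOpen U) (hx : x ∈ U)
    (k : ℕ) : (fun p : E × E => q k (x + p.1) p.2 - q k x p.2) =O[𝓝 0] fun p => ‖p‖ ^ (k + 1) := by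
  have h_diag : Tendsto (fun p : E × E => (p.1, fun _ : Fin k => p.2)) (𝓝 0) (𝓝 0) := by
    have : Continuous fun p : E × E => (p.1, fun _ : Fin k => p.2) := by fun_prop
    exact this.tendsto 0
  have h_norm (p : E × E) : ‖(p.1, fun _ : Fin k => p.2)‖ ≤ ‖p‖ :=
    norm_prod_le_iff.2 ⟨norm_fst_le p, (pi_norm_const_le p.2).trans (norm_snd_le p)⟩
  have h_diff := ((hf.mixedFwdDiff_sub_isBigO hU hx k).comp_tendsto h_diag).trans
    (.pow (.norm_left (.norm_right (isBigO_of_le _ h_norm))) (k + 1))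
  refine (h_diff.const_smul_left ((k.factorial : ℝ)⁻¹)).congr' ?_ .rfl
  filter_upwards [eventually_add_fst_mem hU hx] with p hp
  have h_factorial {y : E} (hy : y ∈ U) :
      mixedFwdDiff univ (fun _ : Fin k => p.2) (q k y) 0 = (k.factorial : ℝ) • q k y p.2 := by
    rw [mixedFwdDiff_const, Finset.card_univ, Fintype.card_fin,
      fwdDiff_iter_zero_of_homogeneous (hf.map_smul k y hy), fwdDiff_iter_eq_factorial,
      Pi.natCast_apply]
  rw [Pi.smul_apply, Function.comp_apply, h_factorial hp, h_factorial hx, ← smul_sub,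
    inv_smul_smul₀ (Nat.cast_ne_zero.2 k.factorial_ne_zero)]

theorem mixedFwdDiff_sub_sub_isBigO (hf : HasHomogeneousExpansionOn f q U) (hU : IsOpen U)
    (hx : x ∈ U) (k : ℕ) :
    (fun p : E × (Fin k → E) => mixedFwdDiff univ p.2 (q k (x + p.1)) 0 -
      mixedFwdDiff univ p.2 (q k x) 0 -
      mixedFwdDiff univ (Fin.cons p.1 p.2 : Fin (k + 1) → E) (q (k + 1) x) 0)
      =O[𝓝 0] fun p => ‖p‖ ^ (k + 2) := by
  have h_next : (fun p : E × (Fin k → E) => mixedFwdDiff univ p.2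
      (fun w => q (k + 1) (x + p.1) w - q (k + 1) x w) 0) =O[𝓝 0] fun p => ‖p‖ ^ (k + 2) := by
    simp only [mixedFwdDiff]
    refine .fun_sum fun t _ => ?_
    rw [isBigO_neg_one_pow_zsmul]
    have h_tendsto : Tendsto (fun p : E × (Fin k → E) => (p.1, 0 + ∑ i ∈ t, p.2 i))
        (𝓝 0) (𝓝 0) := by
      have : Continuous fun p : E × (Fin k → E) => (p.1, 0 + ∑ i ∈ t, p.2 i) := by fun_prop
      simpa [← Prod.zero_eq_mk] using this.tendsto 0
    refine ((hf.apply_add_sub_isBigO hU hx (k + 1)).comp_tendsto h_tendsto).trans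
      (.pow (.norm_left (.norm_right (.prod_left ?_ ?_))) (k + 2))
    · exact isBigO_of_le _ fun p => norm_fst_le p
    · simp only [zero_add]
      exact .fun_sum fun i _ =>
        isBigO_of_le _ fun p => (norm_le_pi_norm p.2 i).trans (norm_snd_le p)
  refine ((hf.sum_mixedFwdDiff_sub_isBigO hx (k + 2) k).sub h_next).congr' ?_ .rfl
  filter_upwards [eventually_add_fst_mem hU hx] with p hp
  rw [mixedFwdDiff_sub, mixedFwdDiff_univ_cons, fwdDiff, zero_add]
  simp only [Finset.sum_range_succ, hf.sum_range_mixedFwdDiff_eq_zero hU hp,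
    hf.sum_range_mixedFwdDiff_eq_zero hU hx, hf.mixedFwdDiff_apply_eq_apply_zero hU hx p.2 p.1]
  abel

lemma exists_norm_mixedFwdDiff_le (hf : HasHomogeneousExpansionOn f q U) (hU : IsOpen U)
    (hx : x ∈ U) (n : ℕ) :
    ∃ C ≥ 0, ∀ v : Fin n → E, ‖mixedFwdDiff univ v (q n x) 0‖ ≤ C * ‖v‖ ^ n := by
  refine exists_norm_le_mul_pow_of_isBigO (fun c v => ?_) ?_
  · simpa using mixedFwdDiff_smul_of_homogeneous (hf.map_smul n x hx) univ c v 0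
  have h_f : Tendsto (fun v : Fin n → E => (x, v)) (𝓝 0) (𝓝 (x, 0)) := by
    have : Continuous fun v : Fin n → E => (x, v) := by fun_prop
    exact this.tendsto 0
  have h_remainder : Tendsto (fun v : Fin n → E => (x, (0 : E), v)) (𝓝 0) (𝓝 (x, 0)) := by
    have : Continuous fun v : Fin n → E => (x, (0 : E), v) := by fun_prop
    exact this.tendsto 0
  have h_pow : (fun v : Fin n → E => ‖((0 : E), v)‖ ^ (n + 1)) =O[𝓝 0] fun v => ‖v‖ ^ n := by
    simp only [Prod.norm_mk, norm_zero, norm_nonneg, sup_of_le_right]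
    exact (isLittleO_norm_pow_norm_pow n.lt_succ_self).isBigO
  refine (((hf.mixedFwdDiff_isBigO hU hx n).comp_tendsto h_f).sub
    (((hf.mixedFwdDiff_remainder_isBigO hx (n + 1) n).comp_tendsto h_remainder).trans
      h_pow)).congr_left fun v => ?_
  simp only [Function.comp_apply, Finset.sum_range_succ, hf.sum_range_mixedFwdDiff_eq_zero hU hx,
    add_zero]
  abel

lemma exists_continuousMultilinearMap_apply_eq (hf : HasHomogeneousExpansionOn f q U)
    (hU : IsOpen U) (hx : x ∈ U) (n : ℕ) :
    ∃ M : E [×n]→L[ℝ] F, ⇑M = fun v => mixedFwdDiff univ v (q n x) 0 := by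
  obtain ⟨C, hC₀, hC⟩ := hf.exists_norm_mixedFwdDiff_le hU hx n
  refine exists_continuousMultilinearMap_coe_eq hC₀ (fun v i a b => ?_) (by simpa using hC)
  rw [mixedFwdDiff_update_add (Finset.mem_univ i), ← mixedFwdDiff_univ_cons,
    hf.mixedFwdDiff_eq_zero_of_lt hU hx n.lt_succ_self, add_zero]

lemma hasFDerivAt (hf : HasHomogeneousExpansionOn f q U) (hU : IsOpen U) (hx : x ∈ U)
    {p : E → FormalMultilinearSeries ℝ E F}
    (hp : ∀ y ∈ U, ∀ n, ⇑(p y n) = fun v => mixedFwdDiff univ v (q n y) 0) (k : ℕ) :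
    HasFDerivAt (p · k) (p x k.succ).curryLeft x := by
  rw [hasFDerivAt_iff_isLittleO_nhds_zero]
  have h_quadratic : (fun h : E => p (x + h) k - p x k - (p x k.succ).curryLeft h)
      =O[𝓝 0] fun h => ‖h‖ ^ 2 := by
    refine isBigO_of_apply_isBigO (by simp)
      ((hf.mixedFwdDiff_sub_sub_isBigO hU hx k).congr' ?_ .rfl)
    filter_upwards [eventually_add_fst_mem hU hx] with y hy
    simp [hp _ hy, hp x hx]
  exact h_quadratic.trans_isLittleO (isLittleO_norm_pow_id one_lt_two)

lemma apply_zero_zero (hf : HasHomogeneousExpansionOn f q U) (hx : x ∈ U) : q 0 x 0 = f x := by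
  obtain ⟨C, hC⟩ := (hf.isBigO 1 x hx).bound
  simpa [sub_eq_zero, eq_comm (a := q 0 x 0)] using hC.self_of_nhds

theorem contDiffOn (hf : HasHomogeneousExpansionOn f q U) (hU : IsOpen U) :
    ContDiffOn ℝ ∞ f U := by
  have h_coeff (x : E) (n : ℕ) : ∃ M : E [×n]→L[ℝ] F,
      x ∈ U → ⇑M = fun v => mixedFwdDiff univ v (q n x) 0 := by
    by_cases hx : x ∈ U
    · exact (hf.exists_continuousMultilinearMap_apply_eq hU hx n).imp fun _ hM _ => hM
    · exact ⟨0, fun h => absurd h hx⟩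
  choose p hp using h_coeff
  have h_deriv (k : ℕ) (x : E) (hx : x ∈ U) : HasFDerivAt (p · k) (p x k.succ).curryLeft x :=
    hf.hasFDerivAt hU hx (fun y hy n => hp y n hy) k
  have h_series : HasFTaylorSeriesUpToOn ∞ f p U :=
    { zero_eq := fun x hx => by
        simpa [mixedFwdDiff, hf.apply_zero_zero hx] using congrFun (hp x 0 hx) 0
      fderivWithin := fun k _ x hx => (h_deriv k x hx).hasFDerivWithinAt
      cont := fun k _ x hx => (h_deriv k x hx).continuousAt.continuousWithinAt }
  exact h_series.contDiffOn

end HasHomogeneousExpansionOn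

end ConverseTaylor

section Isometry

variable {𝕜 E F G : Type*} [RCLike 𝕜] [NormedAddCommGroup E] [NormedSpace 𝕜 E]
  [NormedAddCommGroup F] [NormedSpace 𝕜 F] [NormedAddCommGroup G] [NormedSpace 𝕜 G]

lemma exists_compContinuousMultilinearMap_eq {ι : Type*} (j : F →ₗᵢ[𝕜] G)
    (M : ContinuousMultilinearMap 𝕜 (fun _ : ι => E) G) (hM : ∀ v, M v ∈ range j) :
    ∃ q : ContinuousMultilinearMap 𝕜 (fun _ : ι => E) F,
      j.toContinuousLinearMap.compContinuousMultilinearMap q = M := by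
  let M' := M.codRestrict (LinearMap.range j.toLinearMap) hM
  refine ⟨(j.equivRange.symm.toContinuousLinearEquiv : _ →L[𝕜] F).compContinuousMultilinearMap M',
    ContinuousMultilinearMap.ext fun v => ?_⟩
  exact congrArg Subtype.val (j.equivRange.apply_symm_apply (M' v))

theorem contDiffOn_of_linearIsometry_comp (j : F →ₗᵢ[𝕜] G) {f : E → F} {U : Set E}
    (hU : IsOpen U) (hf : ContDiffOn 𝕜 ∞ (j ∘ f) U)
    (h_range : ∀ x ∈ U, ∀ k v, iteratedFDeriv 𝕜 k (j ∘ f) x v ∈ range j) :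
    ContDiffOn 𝕜 ∞ f U := by
  let J (k : ℕ) : (E [×k]→L[𝕜] F) →ₗᵢ[𝕜] (E [×k]→L[𝕜] G) :=
    { (j.toContinuousLinearMap.compContinuousMultilinearMapL 𝕜 (fun _ => E) F G).toLinearMap with
      norm_map' := j.norm_compContinuousMultilinearMap }
  have h_lift (x : E) (k : ℕ) :
      ∃ q : E [×k]→L[𝕜] F, x ∈ U → J k q = iteratedFDeriv 𝕜 k (j ∘ f) x := by
    by_cases hx : x ∈ U
    · exact (exists_compContinuousMultilinearMap_eq j _ (h_range x hx k)).imp fun q hq _ => hq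
    · exact ⟨0, fun h => absurd h hx⟩
  choose p hp using h_lift
  have h_near {x : E} (hx : x ∈ U) (k : ℕ) :
      J k ∘ (p · k) =ᶠ[𝓝 x] iteratedFDeriv 𝕜 k (j ∘ f) :=
    eventually_of_mem (hU.mem_nhds hx) fun y hy => hp y k hy
  have h_smooth {x : E} (hx : x ∈ U) (k : ℕ) : ContDiffAt 𝕜 ∞ (iteratedFDeriv 𝕜 k (j ∘ f)) x :=
    (hf.contDiffAt (hU.mem_nhds hx)).iteratedFDeriv_right (by exact_mod_cast le_top)
  have h_deriv (k : ℕ) (x : E) (hx : x ∈ U) : HasFDerivAt (p · k) (p x k.succ).curryLeft x := by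
    refine HasFDerivAt.of_comp_of_isEmbedding (f := J k) ?_
      (J k).toContinuousLinearMap.hasFDerivAt (J k).isometry.isEmbedding ?_ (h_near hx k)
    · rw [(J k).isometry.isEmbedding.continuousAt_iff]
      exact (h_smooth hx k).continuousAt.congr (h_near hx k).symm
    · convert ((h_smooth hx k).differentiableAt (by simp)).hasFDerivAt using 1
      ext w v
      have := congrArg (fun M => M (Fin.cons w v)) (hp x (k + 1) hx)
      exact this
  have h_series : HasFTaylorSeriesUpToOn ∞ f p U :=
    { zero_eq := fun x hx => j.injective (congrArg (fun M => M 0) (hp x 0 hx))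
      fderivWithin := fun k _ x hx => (h_deriv k x hx).hasFDerivWithinAt
      cont := fun k _ x hx => (h_deriv k x hx).continuousAt.continuousWithinAt }
  exact h_series.contDiffOn

theorem contDiff_tsum_of_finite_support {ι : Type*} {f : ι → E → F} {b : ℕ → ι → ℝ}
    (hf : ∀ i, ContDiff 𝕜 ∞ (f i)) (hb : ∀ k, Summable (b k))
    (h_le : ∀ k i x, ‖iteratedFDeriv 𝕜 k (f i) x‖ ≤ b k i)
    (h_fin : ∀ k x, (Function.support fun i => iteratedFDeriv 𝕜 k (f i) x).Finite) :
    ContDiff 𝕜 ∞ fun x => ∑' i, f i x := by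
  let j : F →ₗᵢ[𝕜] UniformSpace.Completion F := UniformSpace.Completion.toComplₗᵢ
  have h_norm (k i x) : ‖iteratedFDeriv 𝕜 k (j ∘ f i) x‖ ≤ b k i := by
    rw [j.norm_iteratedFDeriv_comp_left (contDiff_infty.1 (hf i) k).contDiffAt le_rfl]
    exact h_le k i x
  have hj (i) : ContDiff 𝕜 ∞ (j ∘ f i) := j.contDiff.comp (hf i)
  have h_tsum : (j ∘ fun x => ∑' i, f i x) = fun x => ∑' i, (j ∘ f i) x := by
    ext x
    have h_supp : (Function.support fun i => f i x).Finite := by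
      refine (h_fin 0 x).subset fun i hi h => hi ?_
      exact congrArg (fun M => M 0) h
    exact (summable_of_hasFiniteSupport h_supp).map_tsum j.toContinuousLinearMap j.continuous
  rw [← contDiffOn_univ]
  refine contDiffOn_of_linearIsometry_comp j isOpen_univ ?_ fun x _ k v => ?_
  · rw [h_tsum, contDiffOn_univ]
    exact contDiff_tsum (fun i => hj i) (fun k _ => hb k) fun k i x _ => h_norm k i x
  · let J := j.toContinuousLinearMap.compContinuousMultilinearMapL 𝕜 (fun _ : Fin k => E) F _
    have h_iter : iteratedFDeriv 𝕜 k (j ∘ fun x => ∑' i, f i x) x =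
        J (∑' i, iteratedFDeriv 𝕜 k (f i) x) := by
      rw [h_tsum,
        iteratedFDeriv_tsum_apply hj (fun k _ => hb k) (fun k i x _ => h_norm k i x) le_top,
        J.map_tsum (summable_of_hasFiniteSupport (h_fin k x))]
      exact tsum_congr fun i => j.toContinuousLinearMap.iteratedFDeriv_comp_left
        (contDiff_infty.1 (hf i) k).contDiffAt le_rfl
    rw [h_iter]
    exact ⟨_, rfl⟩

end Isometry

section SpecialCurve

variable {E : Type*} [NormedAddCommGroup E] [NormedSpace ℝ E]

lemma superpolynomialDecay_inv_two_pow_pow_self :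
    SuperpolynomialDecay atTop (fun n : ℕ => (2 : ℝ) ^ n) fun n => (((2 : ℝ) ^ n) ^ n)⁻¹ := by
  rw [superpolynomialDecay_iff_isBigO _ (tendsto_pow_atTop_atTop_of_one_lt one_lt_two)]
  intro z
  refine .of_norm_eventuallyLE ?_
  filter_upwards [eventually_ge_atTop z.natAbs] with n hn
  rw [Real.norm_of_nonneg (by positivity), ← zpow_natCast, ← zpow_neg]
  exact zpow_le_zpow_right₀ (one_le_pow₀ one_le_two) (by lia)

lemma summable_two_pow_pow_mul {u : ℕ → ℝ}
    (hu : SuperpolynomialDecay atTop (fun n : ℕ => (2 : ℝ) ^ n) u) (k : ℕ) :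
    Summable fun n => (2 ^ n) ^ k * u n := by
  have h_decay : SuperpolynomialDecay atTop (fun n : ℕ => (2 : ℝ) ^ n)
      fun n => (2 ^ n) ^ k * u n := hu.param_pow_mul k
  have h_geom := (superpolynomialDecay_iff_isBigO _
    (tendsto_pow_atTop_atTop_of_one_lt one_lt_two)).1 h_decay (-1)
  refine summable_of_isBigO_nat summable_geometric_two ?_
  simpa using h_geom

lemma finite_setOf_two_pow_mul_mem {K : Set ℝ} (hK : Bornology.IsBounded K) (h₀ : 0 ∉ K) (t : ℝ) :
    {n : ℕ | 2 ^ n * t ∈ K}.Finite := by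
  rcases eq_or_ne t 0 with rfl | ht
  · simp [h₀]
  · have h_escape : Tendsto (fun n : ℕ => (2 : ℝ) ^ n * t) atTop (Bornology.cobounded ℝ) :=
      (tendsto_mul_right_cobounded ht).comp <| tendsto_norm_atTop_iff_cobounded.1 <|
        tendsto_norm_atTop_atTop.comp (tendsto_pow_atTop_atTop_of_one_lt one_lt_two)
    rw [← Nat.cofinite_eq_atTop] at h_escape
    simpa using h_escape.eventually (Bornology.isBounded_def.1 hK)

theorem contDiff_tsum_comp_two_pow_mul_smul {α : ℝ → ℝ} (hα : ContDiff ℝ ∞ α)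
    (hα_supp : HasCompactSupport α) (h₀ : 0 ∉ tsupport α) {a : ℕ → E}
    (ha : SuperpolynomialDecay atTop (fun n : ℕ => (2 : ℝ) ^ n) fun n => ‖a n‖) :
    ContDiff ℝ ∞ fun t => ∑' n : ℕ, α (2 ^ n * t) • a n := by
  have h_norm (k n : ℕ) (t : ℝ) : ‖iteratedFDeriv ℝ k (fun t => α (2 ^ n * t) • a n) t‖ =
      ‖iteratedFDeriv ℝ k α (2 ^ n * t)‖ * ((2 ^ n) ^ k * ‖a n‖) := by
    have hαk : ContDiff ℝ k α := contDiff_infty.1 hα k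
    rw [norm_iteratedFDeriv_eq_norm_iteratedDeriv, iteratedDeriv_smul_const (by fun_prop),
      iteratedDeriv_comp_const_smul hαk, norm_iteratedFDeriv_eq_norm_iteratedDeriv, norm_smul,
      norm_smul, norm_pow, norm_pow, Real.norm_ofNat]
    ring
  have h_bound (k : ℕ) : ∃ C, ∀ t, ‖iteratedFDeriv ℝ k α t‖ ≤ C :=
    (hα_supp.iteratedFDeriv k).exists_bound_of_continuous
      (hα.continuous_iteratedFDeriv (by exact_mod_cast le_top))
  choose C hC using h_bound
  refine contDiff_tsum_of_finite_support (b := fun k n => C k * ((2 ^ n) ^ k * ‖a n‖))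
    (fun n => by fun_prop) (fun k => ?_) (fun k n t => ?_) fun k t => ?_
  · exact (summable_two_pow_pow_mul ha k).mul_left _
  · rw [h_norm]
    gcongr
    exact hC k _
  · refine (finite_setOf_two_pow_mul_mem hα_supp.isCompact.isBounded h₀ t).subset fun n hn => ?_
    refine tsupport_iteratedFDeriv_subset (𝕜 := ℝ) k (subset_tsupport _ fun h => hn ?_)
    rw [← norm_eq_zero, h_norm, h, norm_zero, zero_mul]

lemma tsum_comp_two_pow_mul_smul {α : ℝ → ℝ} (hα_supp : Function.support α ⊆ Ioo (3 / 4) (5 / 4))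
    (a : ℕ → E) {m : ℕ} {t : ℝ} (ht : 2 ^ m * t ∈ Ioo (7 / 8) (9 / 8)) :
    ∑' n : ℕ, α (2 ^ n * t) • a n = α (2 ^ m * t) • a m := by
  refine tsum_eq_single m fun n hnm => ?_
  by_contra h
  have ht₀ : 0 < t := pos_of_mul_pos_right (lt_trans (by norm_num) ht.1) (by positivity)
  obtain ⟨h_lower, h_upper⟩ := hα_supp (fun h_zero => h (by rw [h_zero, zero_smul]))
  rcases lt_or_gt_of_ne hnm with hlt | hlt
  · have : (2 : ℝ) ^ (n + 1) ≤ 2 ^ m := pow_le_pow_right₀ one_le_two hlt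
    rw [pow_succ] at this
    nlinarith [ht.2]
  · have : (2 : ℝ) ^ (m + 1) ≤ 2 ^ n := pow_le_pow_right₀ one_le_two hlt
    rw [pow_succ] at this
    nlinarith [ht.1]

theorem exists_contDiff_curve_eventuallyEq_affine {a b : ℕ → E}
    (ha : SuperpolynomialDecay atTop (fun n : ℕ => (2 : ℝ) ^ n) fun n => ‖a n‖)
    (hb : SuperpolynomialDecay atTop (fun n : ℕ => (2 : ℝ) ^ n) fun n => ‖b n‖) :
    ∃ c : ℝ → E, ContDiff ℝ ∞ c ∧ c 0 = 0 ∧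
      ∀ m : ℕ, ∀ᶠ t in 𝓝 ((2 ^ m)⁻¹ : ℝ), c t = a m + (t - (2 ^ m)⁻¹) • b m := by
  let φ : ContDiffBump (1 : ℝ) := ⟨1 / 8, 1 / 4, by norm_num, by norm_num⟩
  have hφ_supp : Function.support φ = Ioo (3 / 4) (5 / 4) := by
    rw [φ.support_eq, Real.ball_eq_Ioo]; norm_num [φ]
  have hφ₀ : 0 ∉ tsupport φ := by
    rw [φ.tsupport_eq, Metric.mem_closedBall, Real.dist_eq]; norm_num [φ]
  let d (n : ℕ) : E := a n - (2 ^ n : ℝ)⁻¹ • b n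
  have hd : SuperpolynomialDecay atTop (fun n : ℕ => (2 : ℝ) ^ n) fun n => ‖d n‖ := by
    refine (ha.add hb).trans_abs_le fun n => ?_
    have h_inv : ‖((2 : ℝ) ^ n)⁻¹‖ ≤ 1 := by
      rw [norm_inv, norm_pow, Real.norm_ofNat]
      exact inv_le_one_of_one_le₀ (one_le_pow₀ one_le_two)
    rw [abs_of_nonneg (norm_nonneg _), Pi.add_apply, abs_of_nonneg (by positivity)]
    calc ‖d n‖ ≤ ‖a n‖ + ‖((2 : ℝ) ^ n)⁻¹ • b n‖ := norm_sub_le _ _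
      _ ≤ ‖a n‖ + ‖b n‖ := by
        grw [norm_smul_le, h_inv, one_mul]
  refine ⟨fun t => (∑' n, φ (2 ^ n * t) • d n) + t • ∑' n, φ (2 ^ n * t) • b n, ?_, ?_, ?_⟩
  · exact (contDiff_tsum_comp_two_pow_mul_smul φ.contDiff φ.hasCompactSupport hφ₀ hd).add
      (contDiff_id.smul
        (contDiff_tsum_comp_two_pow_mul_smul φ.contDiff φ.hasCompactSupport hφ₀ hb))
  · have : φ 0 = 0 := image_eq_zero_of_notMem_tsupport hφ₀
    simp [this]
  · intro m
    have h_scale : Tendsto (fun t : ℝ => 2 ^ m * t) (𝓝 (2 ^ m)⁻¹) (𝓝 1) := by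
      have := (continuous_const_mul ((2 : ℝ) ^ m)).tendsto (2 ^ m)⁻¹
      rwa [mul_inv_cancel₀ (by positivity)] at this
    filter_upwards [h_scale.eventually
        (Ioo_mem_nhds (by norm_num : (7 / 8 : ℝ) < 1) (by norm_num : (1 : ℝ) < 9 / 8)),
      h_scale.eventually φ.eventuallyEq_one] with t ht hφt
    rw [tsum_comp_two_pow_mul_smul hφ_supp.subset d ht,
      tsum_comp_two_pow_mul_smul hφ_supp.subset b ht, hφt]
    simp only [Pi.one_apply, d]
    module

end SpecialCurve

section IteratedLineDeriv

variable {𝕜 E F : Type*} [NontriviallyNormedField 𝕜] [NormedAddCommGroup E] [NormedSpace 𝕜 E]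
  [NormedAddCommGroup F] [NormedSpace 𝕜 F]

lemma iteratedDeriv_comp_mul_left (k : ℕ) (f : 𝕜 → F) (c t : 𝕜) :
    iteratedDeriv k (fun s => f (c * s)) t = c ^ k • iteratedDeriv k f (c * t) := by
  induction k generalizing t with
  | zero => simp
  | succ k ih =>
    rw [iteratedDeriv_succ, funext ih, deriv_fun_const_smul_field,
      deriv_comp_mul_left c (iteratedDeriv k f), iteratedDeriv_succ, smul_smul, pow_succ]

variable (𝕜) in
/-- The `k`-th derivative of `t ↦ f (x + t • v)` at `t = 0`. -/
noncomputable def iteratedLineDeriv (k : ℕ) (f : E → F) (x v : E) : F :=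
  iteratedDeriv k (fun t : 𝕜 => f (x + t • v)) 0

lemma iteratedLineDeriv_smul (k : ℕ) (f : E → F) (x : E) (c : 𝕜) (v : E) :
    iteratedLineDeriv 𝕜 k f x (c • v) = c ^ k • iteratedLineDeriv 𝕜 k f x v := by
  have h_scale := iteratedDeriv_comp_mul_left k (fun t : 𝕜 => f (x + t • v)) c 0
  rw [mul_zero] at h_scale
  simpa only [iteratedLineDeriv, smul_smul, mul_comm] using h_scale

lemma iteratedDeriv_comp_add_sub_smul (k : ℕ) (f : E → F) (x v : E) (s : 𝕜) :
    iteratedDeriv k (fun t : 𝕜 => f (x + (t - s) • v)) s = iteratedLineDeriv 𝕜 k f x v := by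
  simp only [iteratedDeriv_comp_sub_const k (fun t : 𝕜 => f (x + t • v)), sub_self,
    iteratedLineDeriv]

lemma iteratedDeriv_comp_add_smul (k : ℕ) (f : E → F) (x v : E) (s : 𝕜) :
    iteratedDeriv k (fun t : 𝕜 => f (x + t • v)) s = iteratedLineDeriv 𝕜 k f (x + s • v) v := by
  rw [← iteratedDeriv_comp_add_sub_smul k f (x + s • v) v s]
  congr! 3 with t
  module

end IteratedLineDeriv

lemma isBigO_norm_snd_pow_of_homogeneous {X E F : Type*} [TopologicalSpace X]
    [NormedAddCommGroup E] [NormedSpace ℝ E] [NormedAddCommGroup F] [NormedSpace ℝ F]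
    {g : X → E → F} {k : ℕ} {x : X} (hg : ∀ y (c : ℝ) v, g y (c • v) = c ^ k • g y v)
    (h : (fun p : X × E => g p.1 p.2) =O[𝓝 (x, 0)] (1 : X × E → ℝ)) :
    (fun p : X × E => g p.1 p.2) =O[𝓝 (x, 0)] fun p => ‖p.2‖ ^ k := by
  obtain ⟨C, hC⟩ := h.bound
  have h_bound : ∀ᶠ p : X × E in 𝓝 x ×ˢ 𝓝 0, ‖g p.1 p.2‖ ≤ C := by
    simpa [← nhds_prod_eq] using hC
  obtain ⟨P, hP, Q, hQ, hPQ⟩ := eventually_prod_iff.1 h_bound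
  obtain ⟨r, hr, hr_ball⟩ := Metric.nhds_basis_closedBall.eventually_iff.1 hQ
  refine .of_bound (C * r⁻¹ ^ k) ?_
  have hP_near : ∀ᶠ p : X × E in 𝓝 (x, 0), P p.1 := continuousAt_fst.eventually hP
  filter_upwards [hP_near] with p hp
  let w : E := (r / ‖p.2‖) • p.2
  have hw : w ∈ Metric.closedBall 0 r := by
    rw [mem_closedBall_zero_iff, norm_smul, norm_div, norm_norm, Real.norm_of_nonneg hr.le,
      div_mul_eq_mul_div, mul_div_assoc]
    exact mul_le_of_le_one_right hr.le (div_self_le_one _)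
  have h_scale : (‖p.2‖ / r) • w = p.2 := by
    rcases eq_or_ne p.2 0 with h₀ | h_ne
    · simp [w, h₀]
    · rw [smul_smul, div_mul_div_cancel₀ hr.ne', div_self (norm_ne_zero_iff.2 h_ne), one_smul]
  calc ‖g p.1 p.2‖ = (‖p.2‖ / r) ^ k * ‖g p.1 w‖ := by
        rw [← h_scale, hg, norm_smul, norm_pow, Real.norm_of_nonneg (by positivity), h_scale]
    _ ≤ (‖p.2‖ / r) ^ k * C := by
        gcongr
        exact hPQ hp (hr_ball hw)
    _ = C * r⁻¹ ^ k * ‖‖p.2‖ ^ k‖ := by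
        rw [norm_pow, norm_norm, div_eq_mul_inv, mul_pow]
        ring

section ArcSmooth

variable {E F : Type*} [NormedAddCommGroup E] [NormedSpace ℝ E]
  [NormedAddCommGroup F] [NormedSpace ℝ F] {f : E → F} {U : Set E} {x : E}

lemma exists_contDiff_eventuallyEq_id_range_subset [HasContDiffBump E] {V : Set E} {x : E}
    (hV : V ∈ 𝓝 x) : ∃ θ : E → E, ContDiff ℝ ∞ θ ∧ θ =ᶠ[𝓝 x] id ∧ range θ ⊆ V := by
  obtain ⟨δ, hδ, h_ball⟩ := Metric.mem_nhds_iff.1 hV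
  let b : ContDiffBump x := ⟨δ / 2, δ, half_pos hδ, half_lt_self hδ⟩
  refine ⟨fun y => x + b y • (y - x), ?_, ?_, ?_⟩
  · exact contDiff_const.add (b.contDiff.smul (contDiff_id.sub contDiff_const))
  · filter_upwards [b.eventuallyEq_one] with y hy
    simp [hy]
  · rintro _ ⟨y, rfl⟩
    refine h_ball ?_
    rw [mem_ball_iff_norm, add_sub_cancel_left, norm_smul, Real.norm_of_nonneg b.nonneg]
    rcases le_or_gt δ (dist y x) with h_far | h_near
    · rwa [b.zero_of_le_dist h_far, zero_mul]
    · exact (mul_le_of_le_one_left (norm_nonneg _) b.le_one).trans_lt (by rwa [← dist_eq_norm])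

lemma eventually_forall_mem_Icc_of_eventually {P : E × E → Prop} (hP : ∀ᶠ p in 𝓝 (x, 0), P p) :
    ∀ᶠ p in 𝓝 (x, (0 : E)), ∀ t ∈ Icc (0 : ℝ) 1, P (p.1 + t • p.2, p.2) := by
  refine isCompact_Icc.eventually_forall_of_forall_eventually fun t _ => ?_
  have h_cont : Continuous fun z : (E × E) × ℝ => (z.1.1 + z.2 • z.1.2, z.1.2) := by fun_prop
  have h_tendsto := h_cont.tendsto ((x, 0), t)
  simp only [smul_zero, add_zero] at h_tendsto
  exact h_tendsto.eventually hP

/-- Smoothness along smooth curves: `f ∘ c` is smooth for every smooth curve `c` in `U`. -/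
def ArcSmoothOn (f : E → F) (U : Set E) : Prop :=
  ∀ c : ℝ → E, ContDiff ℝ ∞ c → range c ⊆ U → ContDiff ℝ ∞ (f ∘ c)

namespace ArcSmoothOn

lemma contDiffAt_comp (hf : ArcSmoothOn f U) (hU : IsOpen U) {c : ℝ → E} (hc : ContDiff ℝ ∞ c)
    {t : ℝ} (ht : c t ∈ U) : ContDiffAt ℝ ∞ (f ∘ c) t := by
  obtain ⟨θ, hθ, hθ_id, hθ_range⟩ := exists_contDiff_eventuallyEq_id_range_subset
    (hc.continuous.continuousAt.preimage_mem_nhds (hU.mem_nhds ht))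
  have h_smooth : ContDiff ℝ ∞ (f ∘ c ∘ θ) := by
    refine hf (c ∘ θ) (hc.comp hθ) ?_
    rw [range_comp]
    exact image_subset_iff.2 hθ_range
  exact h_smooth.contDiffAt.congr_of_eventuallyEq (hθ_id.fun_comp (f ∘ c)).symm

lemma tendsto_iteratedLineDeriv (hf : ArcSmoothOn f U) (hU : IsOpen U) (hx : x ∈ U) (k : ℕ)
    {p : ℕ → E × E} (hp : SuperpolynomialDecay atTop (fun n : ℕ => (2 : ℝ) ^ n)
      fun n => ‖p n - (x, 0)‖) :
    ∃ y, Tendsto (fun n => iteratedLineDeriv ℝ k f (p n).1 (p n).2) atTop (𝓝 y) := by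
  have ha : SuperpolynomialDecay atTop (fun n : ℕ => (2 : ℝ) ^ n) fun n => ‖(p n).1 - x‖ := by
    refine hp.trans_abs_le fun n => ?_
    rw [abs_norm, abs_norm]
    exact norm_fst_le (p n - (x, 0))
  have hb : SuperpolynomialDecay atTop (fun n : ℕ => (2 : ℝ) ^ n) fun n => ‖(p n).2‖ := by
    refine hp.trans_abs_le fun n => ?_
    rw [abs_norm, abs_norm, ← sub_zero (p n).2]
    exact norm_snd_le (p n - (x, 0))
  obtain ⟨c, hc, hc₀, hc_near⟩ := exists_contDiff_curve_eventuallyEq_affine ha hb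
  have h_smooth : ContDiffAt ℝ ∞ (f ∘ fun t => x + c t) 0 :=
    hf.contDiffAt_comp hU (contDiff_const.add hc) (by simpa [hc₀] using hx)
  have h_cont : ContinuousAt (iteratedDeriv k (f ∘ fun t => x + c t)) 0 := by
    rw [iteratedDeriv_eq_equiv_comp]
    exact (LinearIsometryEquiv.continuous _).continuousAt.comp
      (h_smooth.continuousAt_iteratedFDeriv (by exact_mod_cast le_top))
  have h_inv : Tendsto (fun n : ℕ => ((2 : ℝ) ^ n)⁻¹) atTop (𝓝 0) :=
    tendsto_inv_atTop_zero.comp (tendsto_pow_atTop_atTop_of_one_lt one_lt_two)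
  refine ⟨_, (h_cont.tendsto.comp h_inv).congr fun n => ?_⟩
  have h_line : (f ∘ fun t => x + c t) =ᶠ[𝓝 ((2 ^ n)⁻¹ : ℝ)]
      fun t => f ((p n).1 + (t - (2 ^ n)⁻¹) • (p n).2) := by
    filter_upwards [hc_near n] with t ht
    rw [Function.comp_apply, ht, ← add_assoc, add_sub_cancel]
  rw [Function.comp_apply, h_line.iteratedDeriv_eq, iteratedDeriv_comp_add_sub_smul]

lemma iteratedLineDeriv_isBigO_one (hf : ArcSmoothOn f U) (hU : IsOpen U) (hx : x ∈ U) (k : ℕ) :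
    (fun p : E × E => iteratedLineDeriv ℝ k f p.1 p.2) =O[𝓝 (x, 0)] (1 : E × E → ℝ) := by
  by_contra h_unbounded
  have h_large (n : ℕ) : ∃ p : E × E, ‖p - (x, 0)‖ ≤ ((2 ^ n) ^ n)⁻¹ ∧
      n < ‖iteratedLineDeriv ℝ k f p.1 p.2‖ := by
    have h_freq : ∃ᶠ p : E × E in 𝓝 (x, 0), n < ‖iteratedLineDeriv ℝ k f p.1 p.2‖ := by
      refine fun h => h_unbounded (.of_bound n (h.mono fun p hp => ?_))
      simpa using hp
    have h_near := Metric.closedBall_mem_nhds (x, (0 : E)) (ε := ((2 ^ n) ^ n)⁻¹) (by positivity)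
    obtain ⟨p, hp, hp_near⟩ := (h_freq.and_eventually h_near).exists
    exact ⟨p, mem_closedBall_iff_norm.1 hp_near, hp⟩
  choose p hp_near hp_large using h_large
  have hp : SuperpolynomialDecay atTop (fun n : ℕ => (2 : ℝ) ^ n) fun n => ‖p n - (x, 0)‖ :=
    superpolynomialDecay_inv_two_pow_pow_self.trans_abs_le fun n => by
      rw [abs_norm]
      exact (hp_near n).trans (le_abs_self _)
  obtain ⟨y, hy⟩ := hf.tendsto_iteratedLineDeriv hU hx k hp
  exact not_tendsto_nhds_of_tendsto_atTop
    (tendsto_atTop_mono (fun n => (hp_large n).le) tendsto_natCast_atTop_atTop) _ hy.norm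

lemma iteratedLineDeriv_isBigO (hf : ArcSmoothOn f U) (hU : IsOpen U) (hx : x ∈ U) (k : ℕ) :
    (fun p : E × E => iteratedLineDeriv ℝ k f p.1 p.2) =O[𝓝 (x, 0)] fun p => ‖p.2‖ ^ k :=
  isBigO_norm_snd_pow_of_homogeneous (fun y c v => iteratedLineDeriv_smul k f y c v)
    (hf.iteratedLineDeriv_isBigO_one hU hx k)

lemma contDiffAt_comp_line (hf : ArcSmoothOn f U) (hU : IsOpen U) {v : E} {t : ℝ}
    (ht : x + t • v ∈ U) : ContDiffAt ℝ ∞ (fun s : ℝ => f (x + s • v)) t :=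
  hf.contDiffAt_comp hU (c := fun s => x + s • v) (by fun_prop) ht

lemma norm_sub_taylor_le (hf : ArcSmoothOn f U) (hU : IsOpen U) {h : E} {n : ℕ} {B : ℝ}
    (h_segment : ∀ t ∈ Icc (0 : ℝ) 1,
      x + t • h ∈ U ∧ ‖iteratedLineDeriv ℝ (n + 1) f (x + t • h) h‖ ≤ B) :
    ‖f (x + h) - ∑ j ∈ Finset.range (n + 1),
      (j.factorial : ℝ)⁻¹ • iteratedLineDeriv ℝ j f x h‖ ≤ B / n.factorial := by
  have h_smooth (t : ℝ) (ht : t ∈ Icc (0 : ℝ) 1) (k : ℕ) :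
      ContDiffAt ℝ k (fun t : ℝ => f (x + t • h)) t :=
    contDiffAt_infty.1 (hf.contDiffAt_comp_line hU (h_segment t ht).1) k
  have h_deriv (t : ℝ) (ht : t ∈ Icc (0 : ℝ) 1) (k : ℕ) :
      iteratedDerivWithin k (fun t : ℝ => f (x + t • h)) (Icc 0 1) t =
        iteratedLineDeriv ℝ k f (x + t • h) h := by
    rw [iteratedDerivWithin_eq_iteratedDeriv (uniqueDiffOn_Icc one_pos) (h_smooth t ht k) ht,
      iteratedDeriv_comp_add_smul]
  have h_taylor := taylor_mean_remainder_bound (f := fun t : ℝ => f (x + t • h)) zero_le_one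
    (fun t ht => (h_smooth t ht (n + 1)).contDiffWithinAt) (right_mem_Icc.2 zero_le_one)
    fun t ht => (h_deriv t ht (n + 1)).symm ▸ (h_segment t ht).2
  simpa [taylor_within_apply, h_deriv 0 (left_mem_Icc.2 zero_le_one)] using h_taylor

theorem hasHomogeneousExpansionOn (hf : ArcSmoothOn f U) (hU : IsOpen U) :
    HasHomogeneousExpansionOn f
      (fun j x h => (j.factorial : ℝ)⁻¹ • iteratedLineDeriv ℝ j f x h) U where
  map_smul j x _ c h := by rw [iteratedLineDeriv_smul, smul_comm]
  isBigO n x hx := by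
    cases n with
    | zero =>
      have h_add : Tendsto (fun p : E × E => (p.1 + p.2, (0 : E))) (𝓝 (x, 0)) (𝓝 (x, 0)) := by
        have : Continuous fun p : E × E => (p.1 + p.2, (0 : E)) := by fun_prop
        simpa using this.tendsto (x, 0)
      refine ((hf.iteratedLineDeriv_isBigO hU hx 0).comp_tendsto h_add).congr (fun p => ?_)
        fun p => by simp
      simp [iteratedLineDeriv]
    | succ n =>
      obtain ⟨C, hC⟩ := (hf.iteratedLineDeriv_isBigO hU hx (n + 1)).bound
      have hU_near : ∀ᶠ p : E × E in 𝓝 (x, 0), p.1 ∈ U := continuousAt_fst (hU.mem_nhds hx)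
      refine .of_bound (C / n.factorial) ?_
      filter_upwards [eventually_forall_mem_Icc_of_eventually (hU_near.and hC)] with p hp
      exact (hf.norm_sub_taylor_le hU hp).trans_eq (mul_div_right_comm _ _ _)

end ArcSmoothOn

end ArcSmooth

end Boman

theorem stmt14 {E F : Type*} [NormedAddCommGroup E] [NormedSpace ℝ E]
    [NormedAddCommGroup F] [NormedSpace ℝ F] {U : Set E} (hU : IsOpen U) (f : E → F) :
    ContDiffOn ℝ (⊤ : ℕ∞) f U ↔
      ∀ c : ℝ → E, ContDiff ℝ (⊤ : ℕ∞) c → Set.range c ⊆ U →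
        ContDiff ℝ (⊤ : ℕ∞) (f ∘ c) := by
  refine ⟨fun hf c hc h_range => hf.comp_contDiff hc fun t => h_range (mem_range_self t),
    fun hf => ?_⟩
  have h_arc : Boman.ArcSmoothOn f U := hf
  exact (h_arc.hasHomogeneousExpansionOn hU).contDiffOn hU
end
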